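/- arXiv:1907.04753 — 4 statements merged into one kernel-verified Lean document; each statement's English description precedes it below -/
import Mathlib

section
/- Let χ be a quadratic Dirichlet character modulo q induced by the primitive character χ* of conductor q₀. Then for every a ∈ A_q, |G(χ, a)| ≤ √q₀ / φ(q). -/
open scoped BigOperators

/-- `A_q = {1 ≤ a ≤ q : gcd(a, q) = 1}`. -/
def Aq (q : ℕ) : Finset ℕ := (Finset.Icc 1 q).filter (fun a => Nat.Coprime a q)

/-- The normalized Gauss sum `G(χ, n) = (1/φ(q)) Σ_{r ∈ A_q} χ(r) e^{2πi r n/q}`. -/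
noncomputable def gaussG (q : ℕ) (χ : DirichletCharacter ℂ q) (n : ℤ) : ℂ :=
  ((q.totient : ℂ))⁻¹ *
    ∑ r ∈ Aq q, χ (r : ZMod q) * Complex.exp (2 * Real.pi * Complex.I * r * n / q)

/-- Squared norm of a primitive Gauss sum. -/
lemma aux_primitive_norm {N : ℕ} [NeZero N] (χ : DirichletCharacter ℂ N) (h : χ.IsPrimitive)
    (a : ZMod N) (ha : IsUnit a) :
    ‖gaussSum χ (ZMod.stdAddChar.mulShift a)‖ ≤ Real.sqrt N := by
  have hinv : χ⁻¹.IsPrimitive := by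
    unfold DirichletCharacter.IsPrimitive at *
    rw [DirichletCharacter.conductor_inv, h]
  have h1 : (ZMod.dft χ) = fun k => (χ⁻¹ (-1) * gaussSum χ ZMod.stdAddChar) * χ⁻¹ k := by
    funext k
    rw [h.fourierTransform_eq_inv_mul_gaussSum, neg_eq_neg_one_mul k, map_mul]
    ring
  have h2 := congrFun (ZMod.dft_dft (χ : ZMod N → ℂ)) (-1)
  rw [h1, ZMod.dft_const_mul] at h2
  simp only [] at h2
  rw [hinv.fourierTransform_eq_inv_mul_gaussSum] at h2
  simp only [neg_neg, map_one, inv_inv, one_mul, smul_eq_mul, mul_one] at h2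
  have h3 : star (gaussSum χ ZMod.stdAddChar) = χ⁻¹ (-1) * gaussSum χ⁻¹ ZMod.stdAddChar := by
    rw [star_gaussSum_eq, AddChar.inv_mulShift,
      gaussSum_mulShift_of_isPrimitive _ hinv, inv_inv]
    congr 1
    have e : χ (-1) * χ (-1) = 1 := by rw [← map_mul]; simp
    have e2 : χ (-1) * χ⁻¹ (-1) = 1 := by
      rw [← MulChar.mul_apply, mul_inv_cancel, MulChar.one_apply isUnit_one.neg]
    have e3 : χ (-1) ≠ 0 := left_ne_zero_of_mul_eq_one e
    exact mul_left_cancel₀ e3 (e.trans e2.symm)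
  have h4 : gaussSum χ ZMod.stdAddChar * star (gaussSum χ ZMod.stdAddChar) = (N : ℂ) := by
    rw [h3, ← h2]; ring
  have h5 : ‖gaussSum χ ZMod.stdAddChar‖ ^ 2 = (N : ℝ) := by
    have := congrArg norm h4
    rw [norm_mul, norm_star] at this
    rw [sq, this]; simp
  rw [gaussSum_mulShift_of_isPrimitive _ h, norm_mul]
  calc _ ≤ 1 * ‖gaussSum χ ZMod.stdAddChar‖ := by
        gcongr
        exact DirichletCharacter.norm_le_one _ _
    _ = Real.sqrt N := by rw [one_mul, ← h5, Real.sqrt_sq (norm_nonneg _)]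

lemma aux_shift (n : ℕ) (h : ℕ → ℂ) (hp : ∀ r, h (r + n) = h r) (m : ℕ) :
    ∑ r ∈ Finset.range n, h (r + m) = ∑ r ∈ Finset.range n, h r := by
  induction m with
  | zero => simp
  | succ m ih =>
    rw [← ih]
    have e1 := Finset.sum_range_succ (fun r => h (r + m)) n
    have e2 := Finset.sum_range_succ' (fun r => h (r + m)) n
    have e3 : h (n + m) = h (0 + m) := by rw [zero_add, add_comm, hp]
    rw [e1, e3] at e2
    have e4 := add_right_cancel e2
    rw [e4]
    refine Finset.sum_congr rfl fun r _ => ?_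
    congr 1; ring

/-- `e(ra/m)`. -/
noncomputable def auxE (r a m : ℕ) : ℂ := Complex.exp (2 * Real.pi * Complex.I * r * a / m)

lemma auxE_add (r s a m : ℕ) : auxE (r + s) a m = auxE r a m * auxE s a m := by
  unfold auxE
  rw [← Complex.exp_add]; congr 1; push_cast; ring

lemma auxE_self (a m : ℕ) (hm : m ≠ 0) : auxE m a m = 1 := by
  unfold auxE
  rw [Complex.exp_eq_one_iff]
  have : (m : ℂ) ≠ 0 := by exact_mod_cast hm
  exact ⟨a, by push_cast; field_simp⟩

lemma auxE_mul (r a m p : ℕ) (hp : p ≠ 0) : auxE (p * r) a (p * m) = auxE r a m := by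
  unfold auxE
  have hp : (p : ℂ) ≠ 0 := by exact_mod_cast hp
  congr 1
  push_cast
  rw [show 2 * (Real.pi : ℂ) * Complex.I * (p * r) * a = p * (2 * Real.pi * Complex.I * r * a) by ring,
    mul_div_mul_left _ _ hp]

lemma auxE_ne_one (a m p : ℕ) (hm : m ≠ 0) (hp : p ≠ 0) (h : ¬ p ∣ a) : auxE m a (p * m) ≠ 1 := by
  unfold auxE
  rw [Ne, Complex.exp_eq_one_iff]
  rintro ⟨k, hk⟩
  have hpc : (p : ℂ) ≠ 0 := by exact_mod_cast hp
  have hmc : (m : ℂ) ≠ 0 := by exact_mod_cast hm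
  have hpi : (2 * (Real.pi : ℂ) * Complex.I) ≠ 0 := Complex.two_pi_I_ne_zero
  push_cast at hk
  rw [div_eq_iff (mul_ne_zero hpc hmc)] at hk
  have h1 : (2 * (Real.pi : ℂ) * Complex.I * m) * a = (2 * (Real.pi : ℂ) * Complex.I * m) * (p * k) := by
    linear_combination hk
  have h2 := mul_left_cancel₀ (mul_ne_zero hpi hmc) h1
  have h3 : (a : ℤ) = p * k := by exact_mod_cast h2
  exact h (by exact_mod_cast Dvd.intro k h3.symm)

lemma aux_vanish (m p a : ℕ) (hm : m ≠ 0) (hp : p ≠ 0) (h : ¬ p ∣ a) (g : ℕ → ℂ)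
    (hg : ∀ r, g (r + m) = g r) :
    ∑ r ∈ Finset.range (p * m), g r * auxE r a (p * m) = 0 := by
  have hg' : ∀ k r, g (r + k * m) = g r := by
    intro k
    induction k with
    | zero => simp
    | succ k ih => intro r; rw [add_mul, one_mul, ← add_assoc, hg, ih]
  have h1 := aux_shift (p * m) (fun r => g r * auxE r a (p * m))
    (fun r => by rw [hg', auxE_add, auxE_self _ _ (mul_ne_zero hp hm), mul_one]) m
  simp only [hg, auxE_add, ← mul_assoc] at h1
  rw [← Finset.sum_mul] at h1
  by_contra hne
  exact auxE_ne_one a m p hm hp h (mul_left_cancel₀ hne (by rw [h1, mul_one]))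

/-- the sum over residues coprime to `m`. -/
noncomputable def auxS {N : ℕ} (χ : DirichletCharacter ℂ N) (a m : ℕ) : ℂ :=
  ∑ r ∈ Finset.range m, (if r.Coprime m then χ (r : ZMod N) else 0) * auxE r a m

lemma aux_step {N : ℕ} (χ : DirichletCharacter ℂ N) (a m p : ℕ) (hm : m ≠ 0) (hN : N ∣ m)
    (hp : p.Prime) (h : ¬ p ∣ a) : ‖auxS χ a (p * m)‖ ≤ ‖auxS χ a m‖ := by
  have hper : ∀ r : ℕ, (if (r + m).Coprime m then χ ((r + m : ℕ) : ZMod N) else 0)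
      = (if r.Coprime m then χ (r : ZMod N) else 0) := by
    intro r
    have : ((m : ℕ) : ZMod N) = 0 := (ZMod.natCast_eq_zero_iff _ _).2 hN
    simp [this]
  have hv := aux_vanish m p a hm hp.ne_zero h
    (fun r => if r.Coprime m then χ (r : ZMod N) else 0) hper
  by_cases hpm : p ∣ m
  · have : auxS χ a (p * m) = 0 := by
      rw [← hv]
      refine Finset.sum_congr rfl fun r _ => ?_
      have : r.Coprime (p * m) ↔ r.Coprime m := by
        rw [Nat.coprime_mul_iff_right]
        exact ⟨fun h => h.2, fun h => ⟨h.coprime_dvd_right hpm, h⟩⟩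
      simp only [this]
    rw [this, norm_zero]; exact norm_nonneg _
  · have hcop : p.Coprime m := (Nat.Prime.coprime_iff_not_dvd hp).2 hpm
    have key : auxS χ a (p * m) = - (χ (p : ZMod N) * auxS χ a m) := by
      rw [eq_neg_iff_add_eq_zero, ← hv]
      have h2 : χ (p : ZMod N) * auxS χ a m = ∑ r ∈ Finset.range (p * m),
          if p ∣ r then (if r.Coprime m then χ (r : ZMod N) else 0) * auxE r a (p * m) else 0 := by
        rw [← Finset.sum_filter]
        unfold auxS
        rw [Finset.mul_sum]
        refine Finset.sum_bij (fun r _ => p * r) ?_ ?_ ?_ ?_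
        · intro r hr
          simp only [Finset.mem_filter, Finset.mem_range] at *
          exact ⟨Nat.mul_lt_mul_of_pos_left hr hp.pos, Dvd.intro _ rfl⟩
        · intro r _ s _ hrs
          exact Nat.eq_of_mul_eq_mul_left hp.pos hrs
        · intro b hb
          simp only [Finset.mem_filter, Finset.mem_range] at hb
          obtain ⟨hb, c, rfl⟩ := hb
          exact ⟨c, Finset.mem_range.2 (Nat.lt_of_mul_lt_mul_left hb), rfl⟩
        · intro r _
          rw [auxE_mul _ _ _ _ hp.ne_zero]
          have : (p * r).Coprime m ↔ r.Coprime m := by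
            rw [Nat.coprime_mul_iff_left]; tauto
          simp only [this, Nat.cast_mul, map_mul]
          split_ifs <;> ring
      rw [h2]
      unfold auxS
      rw [← Finset.sum_add_distrib]
      refine Finset.sum_congr rfl fun r _ => ?_
      have : r.Coprime (p * m) ↔ ¬ p ∣ r ∧ r.Coprime m := by
        rw [Nat.coprime_mul_iff_right, Nat.coprime_comm, Nat.Prime.coprime_iff_not_dvd hp]
      simp only [this]
      by_cases h3 : p ∣ r <;> simp [h3]
    rw [key, norm_neg, norm_mul]
    exact mul_le_of_le_one_left (norm_nonneg _) (DirichletCharacter.norm_le_one _ _)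

lemma aux_base {N : ℕ} (hN : N ≠ 0) (χ : DirichletCharacter ℂ N) (h : χ.IsPrimitive) (a : ℕ)
    (ha : a.Coprime N) : ‖auxS χ a N‖ ≤ Real.sqrt N := by
  haveI : NeZero N := ⟨hN⟩
  refine le_trans (le_of_eq ?_) (aux_primitive_norm χ h (a : ZMod N) ((ZMod.isUnit_iff_coprime _ _).2 ha))
  congr 1
  unfold auxS gaussSum
  refine Finset.sum_bij (fun r _ => (r : ZMod N)) ?_ ?_ ?_ ?_
  · intros; exact Finset.mem_univ _
  · intro r hr s hs hrs
    rw [Finset.mem_range] at hr hs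
    have := (ZMod.natCast_eq_natCast_iff' _ _ _).1 hrs
    rwa [Nat.mod_eq_of_lt hr, Nat.mod_eq_of_lt hs] at this
  · intro b _
    exact ⟨b.val, Finset.mem_range.2 (ZMod.val_lt b), ZMod.natCast_zmod_val b⟩
  · intro r _
    congr 1
    · split_ifs with hc
      · rfl
      · exact (MulChar.map_nonunit _ (fun hu => hc ((ZMod.isUnit_iff_coprime _ _).1 hu))).symm
    · rw [AddChar.mulShift_apply]
      have := ZMod.stdAddChar_coe (N := N) ((a * r : ℕ) : ℤ)
      push_cast at this
      rw [this]
      unfold auxE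
      congr 1
      ring

lemma aux_main {N : ℕ} (hN : N ≠ 0) (χ : DirichletCharacter ℂ N) (h : χ.IsPrimitive) (a : ℕ)
    (k : ℕ) : k ≠ 0 → a.Coprime (k * N) → ‖auxS χ a (k * N)‖ ≤ Real.sqrt N := by
  induction k using induction_on_primes with
  | zero => intro h; exact absurd rfl h
  | one => intro _ hc; rw [one_mul] at *; exact aux_base hN χ h a hc
  | prime_mul p k hp ih =>
    intro hk hc
    have hk' : k ≠ 0 := right_ne_zero_of_mul hk
    rw [mul_assoc] at *
    rw [Nat.coprime_mul_iff_right] at hc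
    refine (aux_step χ a (k * N) p (mul_ne_zero hk' hN) (Dvd.intro_left _ rfl) hp ?_).trans (ih hk' hc.2)
    exact (Nat.Prime.coprime_iff_not_dvd hp).1 hc.1.symm

/-- If `χ` is a quadratic Dirichlet character mod `q` induced by a primitive character of
conductor `q₀`, then `|G(χ, a)| ≤ √q₀ / φ(q)` for every `a ∈ A_q`. -/
theorem stmt_8 (q q₀ : ℕ) (hq : 0 < q) (hdvd : q₀ ∣ q)
    (χ : DirichletCharacter ℂ q) (χstar : DirichletCharacter ℂ q₀)
    (hprim : χstar.IsPrimitive) (hind : χ = DirichletCharacter.changeLevel hdvd χstar)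
    (hquad : ∀ n : ZMod q, χ n = -1 ∨ χ n = 0 ∨ χ n = 1) (hneg : ∃ n : ZMod q, χ n = -1)
    (a : ℕ) (ha : a ∈ Aq q) :
    ‖gaussG q χ (a : ℤ)‖ ≤ Real.sqrt q₀ / q.totient := by
  obtain ⟨k, rfl⟩ := hdvd
  have hN : q₀ ≠ 0 := by rintro rfl; simp at hq
  have hk : k ≠ 0 := by rintro rfl; simp at hq
  have hac : a.Coprime (k * q₀) := by
    rw [mul_comm]; exact (Finset.mem_filter.1 ha).2
  have hmain := aux_main hN χstar hprim a k hk hac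
  rw [mul_comm k q₀] at hmain
  have hsum : ∑ r ∈ Aq (q₀ * k), χ (r : ZMod (q₀ * k)) *
      Complex.exp (2 * Real.pi * Complex.I * r * ((a : ℤ) : ℂ) / ((q₀ * k : ℕ) : ℂ))
      = auxS χstar a (q₀ * k) := by
    have hs := aux_shift (q₀ * k) (fun r => (if r.Coprime (q₀ * k) then χstar (r : ZMod q₀) else 0)
      * auxE r a (q₀ * k)) (fun r => by
        rw [auxE_add, auxE_self _ _ hq.ne']
        simp) 1
    unfold auxS
    rw [← hs]
    have hI : Finset.Icc 1 (q₀ * k) = (Finset.range (q₀ * k)).image (· + 1) := by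
      ext x
      simp only [Finset.mem_Icc, Finset.mem_image, Finset.mem_range]
      constructor
      · rintro ⟨h1, h2⟩; exact ⟨x - 1, by omega, by omega⟩
      · rintro ⟨y, h1, rfl⟩; omega
    unfold Aq
    rw [Finset.sum_filter, hI, Finset.sum_image (fun _ _ _ _ h => Nat.succ_injective h)]
    refine Finset.sum_congr rfl fun r _ => ?_
    by_cases hc : (r + 1).Coprime (q₀ * k)
    · rw [if_pos hc, if_pos hc]
      congr 1
      rw [hind]
      have := DirichletCharacter.changeLevel_eq_cast_of_dvd' χstar (Dvd.intro k rfl)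
        (a := ((r + 1 : ℕ) : ℤ)) (m := q₀ * k) (Nat.isCoprime_iff_coprime.2 hc)
      simpa only [Int.cast_natCast] using this
    · rw [if_neg hc, if_neg hc, zero_mul]
  unfold gaussG
  rw [hsum, norm_mul, norm_inv, Complex.norm_natCast, inv_mul_eq_div]
  gcongr
end

section
/- There is a constant C > 0 (depending only on η) such that for every s ∈ ℕ, every integer Q with 1 ≤ Q ≤ 2^{2s}, every r ∈ {1, …, Q}, every β ∈ [1/2, 1], every finitely supported f : ℤ → ℂ, and every λ > 0, one has λ · #{x ∈ ℤ : sup_{n ∈ ℕ₀} |M_{2^n}^β(ℱ⁻¹(η_s f̂))(Qx + r)| > λ} ≤ C Σ_{x ∈ ℤ} |ℱ⁻¹(η_s f̂)(Qx + r)|. -/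
open scoped BigOperators

/-- `η` is smooth, `0 ≤ η ≤ 1`, `η = 1` on `[−1/4, 1/4]`, `η = 0` off `(−1/2, 1/2)`,
and `η` is a convolution of two smooth functions supported in `(−1/2, 1/2)`. -/
def IsEta (η : ℝ → ℝ) : Prop :=
  ContDiff ℝ (⊤ : ℕ∞) η ∧ (∀ ξ, 0 ≤ η ξ ∧ η ξ ≤ 1) ∧ (∀ ξ : ℝ, |ξ| ≤ 1 / 4 → η ξ = 1) ∧
    (∀ ξ : ℝ, 1 / 2 ≤ |ξ| → η ξ = 0) ∧
    ∃ g₁ g₂ : ℝ → ℝ, ContDiff ℝ (⊤ : ℕ∞) g₁ ∧ ContDiff ℝ (⊤ : ℕ∞) g₂ ∧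
      (∀ x : ℝ, x ∉ Set.Ioo (-(1 / 2) : ℝ) (1 / 2) → g₁ x = 0) ∧
      (∀ x : ℝ, x ∉ Set.Ioo (-(1 / 2) : ℝ) (1 / 2) → g₂ x = 0) ∧
      ∀ x : ℝ, η x = ∫ y : ℝ, g₁ y * g₂ (x - y)

/-- `η_s(ξ) = η(2^{4s} ξ)`, regarded as a 1-periodic function (periodization). -/
noncomputable def etaPer (η : ℝ → ℝ) (s : ℕ) (ξ : ℝ) : ℝ :=
  ∑' k : ℤ, η (2 ^ (4 * s) * (ξ - k))

/-- The Fourier transform `f̂(ξ) = Σ_{n ∈ ℤ} f(n) e^{−2πi ξ n}` of a (finitely supported)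
function on `ℤ`. -/
noncomputable def fhat (f : ℤ → ℂ) (ξ : ℝ) : ℂ :=
  ∑' n : ℤ, f n * Complex.exp (-(2 * Real.pi * Complex.I * ξ * n))

/-- The inverse Fourier transform `ℱ⁻¹g(x) = ∫₀¹ g(ξ) e^{2πi ξ x} dξ`, `x ∈ ℤ`. -/
noncomputable def FinvInt (g : ℝ → ℂ) (x : ℤ) : ℂ :=
  ∫ ξ in (0 : ℝ)..1, g ξ * Complex.exp (2 * Real.pi * Complex.I * ξ * x)

/-- The discrete operator `M_N^β f(x) = (1/N) Σ_{n=1}^N ((n^β − (n−1)^β)/β) f(x + n)`. -/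
noncomputable def Mop (β : ℝ) (N : ℕ) (g : ℤ → ℂ) (x : ℤ) : ℂ :=
  ((N : ℂ))⁻¹ * ∑ n ∈ Finset.Icc 1 N,
    (((((n : ℝ) ^ β - ((n : ℝ) - 1) ^ β) / β) : ℝ) : ℂ) * g (x + n)

open scoped ENNReal FourierTransform SchwartzMap

namespace S11

/-- Oscillatory integral. -/
noncomputable def osc (Φ : ℝ → ℂ) (u : ℝ) : ℂ :=
  ∫ ξ : ℝ, Φ ξ * Complex.exp (2 * Real.pi * Complex.I * ξ * u)

lemma osc_decay (Φ : ℝ → ℂ) (h1 : ContDiff ℝ (⊤ : ℕ∞) Φ) (h2 : HasCompactSupport Φ) :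
    ∃ D : ℝ, 0 < D ∧ ∀ u : ℝ, ‖osc Φ u‖ ≤ D / (1 + u ^ 2) := by
  let S : 𝓢(ℝ, ℂ) := h2.toSchwartzMap h1
  have key : ∀ u : ℝ, osc Φ u = (𝓕 S) (-u) := by
    intro u
    rw [SchwartzMap.fourier_coe, Real.fourier_real_eq_integral_exp_smul]
    unfold osc
    congr 1
    ext ξ
    have : S ξ = Φ ξ := rfl
    rw [this, smul_eq_mul, mul_comm]
    congr 2
    push_cast
    ring
  obtain ⟨C0, hC0, h0⟩ := (𝓕 S).decay 0 0
  obtain ⟨C2, hC2, h2'⟩ := (𝓕 S).decay 2 0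
  refine ⟨C0 + C2, by positivity, fun u => ?_⟩
  rw [key, le_div_iff₀ (by positivity)]
  have a := h0 (-u)
  have b := h2' (-u)
  simp only [norm_iteratedFDeriv_zero, pow_zero, one_mul, norm_neg, Real.norm_eq_abs, sq_abs] at a b
  nlinarith

lemma weak (H : ℤ → ℝ≥0∞) (c : ℝ≥0∞) : ∀ (n : ℕ) (S : Finset ℤ) (a : ℤ), S.card ≤ n →
    (∀ x ∈ S, a ≤ x) →
    (∀ x ∈ S, ∃ K : ℕ, c * (K + 1) ≤ ∑ m ∈ Finset.range (K + 1), H (x + m)) →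
    ∃ T : Finset ℤ, (∀ y ∈ T, a ≤ y) ∧ c * S.card ≤ ∑ y ∈ T, H y := by
  intro n
  induction n with
  | zero =>
    intro S a hS _ _
    exact ⟨∅, by simp, by simp [Nat.le_zero.mp hS]⟩
  | succ n ih =>
    intro S a hS ha hK
    rcases S.eq_empty_or_nonempty with rfl | hne
    · exact ⟨∅, by simp, by simp⟩
    set x := S.min' hne with hx
    have hxS : x ∈ S := S.min'_mem hne
    obtain ⟨K, hK'⟩ := hK x hxS
    set S' := S.filter (fun y => x + K + 1 ≤ y) with hS'
    have hsub : S' ⊆ S.erase x := by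
      intro y hy
      simp only [hS', Finset.mem_filter] at hy
      rw [Finset.mem_erase]
      exact ⟨by omega, hy.1⟩
    have hc' : S'.card ≤ n := by
      have := Finset.card_le_card hsub
      rw [Finset.card_erase_of_mem hxS] at this
      omega
    obtain ⟨T', hT1, hT2⟩ := ih S' (x + K + 1) hc' (fun y hy => (Finset.mem_filter.mp hy).2)
      (fun y hy => hK y (Finset.mem_filter.mp hy).1)
    let T0 : Finset ℤ := (Finset.range (K + 1)).image (fun m : ℕ => x + m)
    have hT0 : ∑ y ∈ T0, H y = ∑ m ∈ Finset.range (K + 1), H (x + m) := by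
      apply Finset.sum_image
      intro p _ q _ h
      simpa using h
    have hdisj : Disjoint T0 T' := by
      rw [Finset.disjoint_left]
      intro y hy hy'
      have h1 := hT1 y hy'
      simp only [T0, Finset.mem_image, Finset.mem_range] at hy
      obtain ⟨m, hm, rfl⟩ := hy
      omega
    have hcard : S.card ≤ (K + 1) + S'.card := by
      have h3 : S ⊆ T0 ∪ S' := by
        intro y hy
        rw [Finset.mem_union]
        by_cases h : x + K + 1 ≤ y
        · right; exact Finset.mem_filter.mpr ⟨hy, h⟩
        · left
          have : x ≤ y := S.min'_le y hy
          simp only [T0, Finset.mem_image, Finset.mem_range]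
          exact ⟨(y - x).toNat, by omega, by omega⟩
      have h4 : T0.card ≤ K + 1 := by simpa using Finset.card_image_le (s := Finset.range (K+1)) (f := fun m : ℕ => x + (m:ℤ))
      calc S.card ≤ (T0 ∪ S').card := Finset.card_le_card h3
        _ ≤ _ := (Finset.card_union_le _ _).trans (by omega)
    refine ⟨T0 ∪ T', ?_, ?_⟩
    · intro y hy
      rw [Finset.mem_union] at hy
      have hax := ha x hxS
      rcases hy with hy | hy
      · simp only [T0, Finset.mem_image, Finset.mem_range] at hy
        obtain ⟨m, hm, rfl⟩ := hy
        omega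
      · have := hT1 y hy
        omega
    · rw [Finset.sum_union hdisj, hT0]
      calc c * (S.card : ℝ≥0∞) ≤ c * (((K + 1) + S'.card : ℕ) : ℝ≥0∞) := by gcongr
        _ = c * (K + 1) + c * S'.card := by push_cast; ring
        _ ≤ _ := add_le_add hK' hT2

lemma weak_tsum (H : ℤ → ℝ≥0∞) (c : ℝ≥0∞) (S : Finset ℤ)
    (h : ∀ x ∈ S, ∃ K : ℕ, c * (K + 1) ≤ ∑ m ∈ Finset.range (K + 1), H (x + m)) :
    c * S.card ≤ ∑' y, H y := by
  rcases S.eq_empty_or_nonempty with rfl | hne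
  · simp
  obtain ⟨T, -, hT⟩ := weak H c S.card S (S.min' hne) le_rfl (fun x hx => S.min'_le x hx) h
  exact hT.trans (ENNReal.sum_le_tsum T)

lemma blocks (u H : ℤ → ℝ≥0∞) (Q : ℕ)
    (h : ∀ (x : ℤ) (j : ℕ), j < Q → u (Q * x + j) ≤ H x) (x : ℤ) (K : ℕ) :
    ∑ n ∈ Finset.range (K * Q), u (Q * x + n) ≤ Q * ∑ m ∈ Finset.range K, H (x + m) := by
  induction K with
  | zero => simp
  | succ K ih =>
    rw [add_mul, one_mul, Finset.sum_range_add, Finset.sum_range_succ, mul_add]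
    refine add_le_add ih ?_
    calc ∑ j ∈ Finset.range Q, u (Q * x + ((K * Q + j : ℕ) : ℤ))
        ≤ ∑ j ∈ Finset.range Q, H (x + K) := by
          refine Finset.sum_le_sum fun j hj => ?_
          have := h (x + K) j (Finset.mem_range.mp hj)
          have e : (Q : ℤ) * x + ((K * Q + j : ℕ) : ℤ) = Q * (x + K) + j := by push_cast; ring
          rw [e]
          exact this
      _ = _ := by simp

lemma blocks2 (u H : ℤ → ℝ≥0∞) (Q : ℕ) (hQ : 1 ≤ Q)
    (h : ∀ (x : ℤ) (j : ℕ), j < Q → u (Q * x + j) ≤ H x) (x : ℤ) (N : ℕ) :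
    ((N / Q : ℕ) + 1) * ∑ n ∈ Finset.Icc 1 N, u (Q * x + n) ≤
      2 * N * ∑ m ∈ Finset.range (N / Q + 1), H (x + m) := by
  rcases lt_or_ge N Q with hN | hN
  · rw [Nat.div_eq_of_lt hN]
    have : ∑ n ∈ Finset.Icc 1 N, u (Q * x + n) ≤ ∑ n ∈ Finset.Icc 1 N, H x := by
      refine Finset.sum_le_sum fun j hj => h x j ?_
      have := (Finset.mem_Icc.mp hj).2
      omega
    simp only [Finset.sum_const, Nat.card_Icc, nsmul_eq_mul, Nat.add_sub_cancel] at this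
    simp only [Nat.cast_zero, zero_add, one_mul, Finset.range_one, Finset.sum_singleton, add_zero]
    refine this.trans ?_
    gcongr
    exact le_mul_of_one_le_left zero_le (by norm_num)
  · set K := N / Q with hK
    have h1 : N < (K + 1) * Q := by
      have := Nat.lt_div_mul_add (a := N) (b := Q) (by omega)
      rw [add_mul, one_mul]; exact this
    have h2 : K * Q ≤ N := Nat.div_mul_le_self N Q
    have h3 : ∑ n ∈ Finset.Icc 1 N, u (Q * x + n) ≤
        ∑ n ∈ Finset.range ((K + 1) * Q), u (Q * x + n) := by
      apply Finset.sum_le_sum_of_subset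
      intro n hn
      rw [Finset.mem_range]
      have := (Finset.mem_Icc.mp hn).2
      omega
    have h4 : ((K : ℝ≥0∞) + 1) * Q ≤ 2 * N := by
      have : (K + 1) * Q ≤ 2 * N := by rw [add_mul, one_mul]; omega
      exact_mod_cast this
    calc ((K : ℝ≥0∞) + 1) * ∑ n ∈ Finset.Icc 1 N, u (Q * x + n)
        ≤ (K + 1) * (Q * ∑ m ∈ Finset.range (K + 1), H (x + m)) := by
          gcongr
          exact h3.trans (blocks u H Q h x (K + 1))
      _ = ((K + 1) * Q) * ∑ m ∈ Finset.range (K + 1), H (x + m) := by ring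
      _ ≤ _ := by gcongr

lemma weight_bound (β : ℝ) (h1 : 1 / 2 ≤ β) (h2 : β ≤ 1) (n : ℕ) (hn : 1 ≤ n) :
    |((n : ℝ) ^ β - ((n : ℝ) - 1) ^ β) / β| ≤ 2 := by
  have hn' : (0 : ℝ) ≤ (n : ℝ) - 1 := by
    have : (1 : ℝ) ≤ n := by exact_mod_cast hn
    linarith
  have hb : 0 < β := by linarith
  have e1 : ((n : ℝ) - 1) ^ β ≤ (n : ℝ) ^ β := Real.rpow_le_rpow hn' (by linarith) hb.le
  have e2 := Real.rpow_add_le_add_rpow hn' zero_le_one hb.le h2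
  rw [sub_add_cancel, Real.one_rpow] at e2
  rw [abs_of_nonneg (div_nonneg (by linarith) hb.le), div_le_iff₀ hb]
  linarith

lemma Mop_bound (β : ℝ) (h1 : 1 / 2 ≤ β) (h2 : β ≤ 1) (N : ℕ) (hN : 1 ≤ N) (g : ℤ → ℂ) (x : ℤ) :
    (N : ℝ) * ‖Mop β N g x‖ ≤ 2 * ∑ n ∈ Finset.Icc 1 N, ‖g (x + n)‖ := by
  have hN0 : (0 : ℝ) < N := by exact_mod_cast hN
  unfold Mop
  rw [norm_mul, norm_inv, Complex.norm_natCast, ← mul_assoc, mul_inv_cancel₀ hN0.ne', one_mul,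
    Finset.mul_sum]
  refine (norm_sum_le _ _).trans (Finset.sum_le_sum fun n hn => ?_)
  rw [norm_mul, Complex.norm_real, Real.norm_eq_abs]
  gcongr
  exact weight_bound β h1 h2 n (Finset.mem_Icc.mp hn).1

lemma eta_compact (η : ℝ → ℝ) (h : ∀ ξ : ℝ, 1 / 2 ≤ |ξ| → η ξ = 0) (c : ℝ) (hc : 1 ≤ c)
    (g : ℝ → ℂ) : HasCompactSupport (fun ξ : ℝ => (η (c * ξ) : ℂ) * g ξ) := by
  apply HasCompactSupport.intro (isCompact_Icc (a := (-1 : ℝ)) (b := 1))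
  intro x hx
  rw [h (c * x)]
  · simp
  · have : 1 < |x| := by
      by_contra hcon
      exact hx (abs_le.mp (not_lt.mp hcon))
    rw [abs_mul, abs_of_nonneg (by linarith)]
    nlinarith

/-- Sampling identity for exponentials. -/
lemma exp_sampling (η : ℝ → ℝ) (hs : ContDiff ℝ (⊤ : ℕ∞) η)
    (h1 : ∀ ξ : ℝ, |ξ| ≤ 1 / 4 → η ξ = 1)
    (h0 : ∀ ξ : ℝ, 1 / 2 ≤ |ξ| → η ξ = 0) (ω t : ℝ) (hω : |ω| ≤ 1 / 4) :
    ∑' y : ℤ, osc (fun ξ => (η ξ : ℂ)) (t - y) * Complex.exp (2 * Real.pi * Complex.I * ω * y) =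
      Complex.exp (2 * Real.pi * Complex.I * ω * t) := by
  let f : ℝ → ℂ := fun ξ => (η ξ : ℂ) * Complex.exp (2 * Real.pi * Complex.I * ξ * t)
  have hf1 : ContDiff ℝ (⊤ : ℕ∞) f := by
    have a : ContDiff ℝ (⊤ : ℕ∞) (fun ξ => (η ξ : ℂ)) := Complex.ofRealCLM.contDiff.comp hs
    have b : ContDiff ℝ (⊤ : ℕ∞) (fun ξ : ℝ => (ξ : ℂ)) := Complex.ofRealCLM.contDiff
    exact a.mul (((contDiff_const.mul b).mul contDiff_const).cexp)
  have hf2 : HasCompactSupport f := by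
    simpa using eta_compact η h0 1 le_rfl (fun ξ => Complex.exp (2 * Real.pi * Complex.I * ξ * t))
  let S : 𝓢(ℝ, ℂ) := hf2.toSchwartzMap hf1
  have hS : ∀ ξ, S ξ = f ξ := fun _ => rfl
  have P := SchwartzMap.tsum_eq_tsum_fourier S ω
  rw [tsum_eq_single 0] at P
  · simp only [hS, f, Int.cast_zero, add_zero, h1 ω hω, Complex.ofReal_one, one_mul] at P
    rw [P]
    congr 1
    ext y
    rw [fourier_coe_apply, SchwartzMap.fourier_coe, Real.fourier_real_eq_integral_exp_smul]
    congr 1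
    · unfold osc
      congr 1
      ext ξ
      rw [hS, smul_eq_mul]
      simp only [f]
      rw [mul_left_comm, ← Complex.exp_add]
      congr 2
      push_cast
      ring
    · congr 1
      push_cast
      ring
  · intro n hn
    rw [hS]
    simp only [f]
    rw [h0]
    · simp
    · have : (1 : ℝ) ≤ |(n : ℝ)| := by exact_mod_cast Int.one_le_abs hn
      have := abs_sub_abs_le_abs_sub (n : ℝ) (-ω)
      rw [abs_neg, sub_neg_eq_add, add_comm (n : ℝ)] at this
      linarith

lemma summable_inv (c : ℝ) : Summable (fun y : ℤ => c / (1 + (y : ℝ) ^ 2)) := by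
  have h : Summable (fun y : ℤ => 1 / (1 + (y : ℝ) ^ 2)) := by
    refine Summable.of_norm_bounded_eventually
      (g := fun y : ℤ => 1 / (y : ℝ) ^ 2) (Real.summable_one_div_int_pow.mpr one_lt_two) ?_
    have : ({0} : Set ℤ)ᶜ ∈ Filter.cofinite := (Set.finite_singleton 0).compl_mem_cofinite
    filter_upwards [this] with y hy
    have hy' : (y : ℝ) ≠ 0 := by exact_mod_cast hy
    rw [Real.norm_of_nonneg (by positivity)]
    gcongr
    linarith
  simpa [div_eq_mul_inv] using h.mul_left c

lemma shift_bound (D : ℝ) (hD : 0 < D) (x y : ℤ) (t : ℝ) (ht0 : 0 ≤ t) (ht1 : t ≤ 1) :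
    D / (1 + ((x : ℝ) + t - y) ^ 2) ≤ 3 * D / (1 + ((x - y : ℤ) : ℝ) ^ 2) := by
  rw [div_le_div_iff₀ (by positivity) (by positivity)]
  push_cast
  have : 1 + ((x : ℝ) - y) ^ 2 ≤ 3 * (1 + ((x : ℝ) + t - y) ^ 2) := by
    nlinarith [sq_nonneg ((x : ℝ) - y + 2 * t), sq_nonneg ((x : ℝ) + t - y)]
  nlinarith

lemma summable_shift (c : ℝ) (x : ℤ) :
    Summable (fun y : ℤ => c / (1 + ((x - y : ℤ) : ℝ) ^ 2)) :=
  (Equiv.subLeft x).summable_iff.mpr (summable_inv c)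

lemma norm_exp_aux (a b : ℝ) : ‖Complex.exp (2 * Real.pi * Complex.I * a * b)‖ = 1 := by
  have : (2 * Real.pi * Complex.I * a * b : ℂ) = ((2 * Real.pi * a * b : ℝ) : ℂ) * Complex.I := by
    push_cast; ring
  rw [this, Complex.norm_exp_ofReal_mul_I]

lemma sampling (η : ℝ → ℝ) (hs : ContDiff ℝ (⊤ : ℕ∞) η)
    (h1 : ∀ ξ : ℝ, |ξ| ≤ 1 / 4 → η ξ = 1)
    (h0 : ∀ ξ : ℝ, 1 / 2 ≤ |ξ| → η ξ = 0) (D : ℝ) (hD : 0 < D)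
    (hdec : ∀ u : ℝ, ‖osc (fun ξ => (η ξ : ℂ)) u‖ ≤ D / (1 + u ^ 2))
    (Φ : ℝ → ℂ) (hΦ : Continuous Φ) (hΦc : HasCompactSupport Φ) (Q r : ℝ)
    (hQ : ∀ ξ, Φ ξ ≠ 0 → |Q * ξ| ≤ 1 / 4) (x : ℤ) (t : ℝ) (ht0 : 0 ≤ t) (ht1 : t ≤ 1) :
    osc Φ (Q * (x + t) + r) =
      ∑' y : ℤ, osc (fun ξ => (η ξ : ℂ)) (x + t - y) * osc Φ (Q * y + r) := by
  have hint : MeasureTheory.Integrable Φ := hΦ.integrable_of_hasCompactSupport hΦc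
  let G : ℤ → ℝ → ℂ := fun y ξ => osc (fun ξ => (η ξ : ℂ)) (x + t - y) *
    (Φ ξ * Complex.exp (2 * Real.pi * Complex.I * ξ * ((Q * y + r : ℝ) : ℂ)))
  have hG : ∀ y, MeasureTheory.Integrable (G y) := by
    intro y
    refine MeasureTheory.Integrable.const_mul ?_ _
    refine Continuous.integrable_of_hasCompactSupport (by fun_prop) hΦc.mul_right
  have hnorm : ∀ y ξ, ‖G y ξ‖ = ‖osc (fun ξ => (η ξ : ℂ)) (x + t - y)‖ * ‖Φ ξ‖ := by
    intro y ξ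
    simp only [G]
    rw [norm_mul, norm_mul, norm_exp_aux, mul_one]
  have hsum : Summable (fun y => ∫ ξ, ‖G y ξ‖) := by
    simp only [hnorm, MeasureTheory.integral_const_mul]
    refine Summable.mul_right _ ?_
    refine Summable.of_nonneg_of_le (fun _ => norm_nonneg _) (fun y => ?_)
      (summable_shift (3 * D) x)
    exact (hdec _).trans (shift_bound D hD x y t ht0 ht1)
  have key := MeasureTheory.integral_tsum_of_summable_integral_norm hG hsum
  have e1 : ∀ y, ∫ ξ, G y ξ = osc (fun ξ => (η ξ : ℂ)) (x + t - y) * osc Φ (Q * y + r) := by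
    intro y
    simp only [G]
    rw [MeasureTheory.integral_const_mul]
    rfl
  simp only [e1] at key
  rw [key]
  unfold osc
  congr 1
  ext ξ
  by_cases hz : Φ ξ = 0
  · simp [G, hz]
  · have := exp_sampling η hs h1 h0 (Q * ξ) (x + t) (hQ ξ hz)
    have e2 : ∀ y, G y ξ = (Φ ξ * Complex.exp (2 * Real.pi * Complex.I * ξ * r)) *
        (osc (fun ξ => (η ξ : ℂ)) (x + t - y) *
          Complex.exp (2 * Real.pi * Complex.I * ((Q * ξ : ℝ) : ℂ) * y)) := by
      intro y
      simp only [G]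
      have : Complex.exp (2 * Real.pi * Complex.I * ξ * ((Q * y + r : ℝ) : ℂ)) =
        Complex.exp (2 * Real.pi * Complex.I * ξ * r) *
          Complex.exp (2 * Real.pi * Complex.I * ((Q * ξ : ℝ) : ℂ) * y) := by
        rw [← Complex.exp_add]
        congr 1
        push_cast
        ring
      rw [this]
      ring
    simp only [e2]
    rw [tsum_mul_left, this, mul_assoc (Φ ξ), ← Complex.exp_add]
    congr 2
    push_cast
    ring

lemma fhat_eq (f : ℤ → ℂ) (hf : (Function.support f).Finite) (ξ : ℝ) :
    fhat f ξ = ∑ n ∈ hf.toFinset, f n * Complex.exp (-(2 * Real.pi * Complex.I * ξ * n)) := by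
  unfold fhat
  apply tsum_eq_sum
  intro n hn
  have : f n = 0 := by simpa using hn
  simp [this]

lemma fhat_smooth (f : ℤ → ℂ) (hf : (Function.support f).Finite) :
    ContDiff ℝ (⊤ : ℕ∞) (fhat f) := by
  have : fhat f = fun ξ : ℝ =>
      ∑ n ∈ hf.toFinset, f n * Complex.exp (-(2 * Real.pi * Complex.I * ξ * n)) :=
    funext (fhat_eq f hf)
  rw [this]
  have b : ContDiff ℝ (⊤ : ℕ∞) (fun ξ : ℝ => (ξ : ℂ)) := Complex.ofRealCLM.contDiff
  refine ContDiff.sum fun n _ => ?_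
  exact contDiff_const.mul (((contDiff_const.mul b).mul contDiff_const).neg.cexp)

lemma fhat_periodic (f : ℤ → ℂ) : Function.Periodic (fhat f) 1 := by
  intro ξ
  unfold fhat
  congr 1
  ext n
  congr 1
  rw [Complex.exp_eq_exp_iff_exists_int]
  refine ⟨-n, ?_⟩
  push_cast
  ring

lemma etaPer_periodic (η : ℝ → ℝ) (s : ℕ) : Function.Periodic (etaPer η s) 1 := by
  intro ξ
  unfold etaPer
  rw [← (Equiv.addRight (1 : ℤ)).tsum_eq]
  congr 1
  ext k
  simp

lemma etaPer_eq (η : ℝ → ℝ) (h0 : ∀ ξ : ℝ, 1 / 2 ≤ |ξ| → η ξ = 0) (s : ℕ) (ξ : ℝ)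
    (hξ : |ξ| ≤ 1 / 2) : etaPer η s ξ = η (2 ^ (4 * s) * ξ) := by
  unfold etaPer
  rw [tsum_eq_single 0]
  · simp
  · intro k hk
    apply h0
    have a : (1 : ℝ) ≤ |(k : ℝ)| := by exact_mod_cast Int.one_le_abs hk
    have b := abs_sub_abs_le_abs_sub (k : ℝ) ξ
    rw [abs_sub_comm] at b
    have c : (1 : ℝ) ≤ 2 ^ (4 * s) := one_le_pow₀ (by norm_num)
    rw [abs_mul, abs_of_nonneg (by positivity)]
    nlinarith

lemma F_eq (η : ℝ → ℝ) (h0 : ∀ ξ : ℝ, 1 / 2 ≤ |ξ| → η ξ = 0) (s : ℕ) (f : ℤ → ℂ) (n : ℤ) :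
    FinvInt (fun ξ => (etaPer η s ξ : ℂ) * fhat f ξ) n =
      osc (fun ξ => (η (2 ^ (4 * s) * ξ) : ℂ) * fhat f ξ) n := by
  unfold FinvInt
  have hper : Function.Periodic (fun ξ : ℝ => (etaPer η s ξ : ℂ) * fhat f ξ *
      Complex.exp (2 * Real.pi * Complex.I * ξ * n)) 1 := by
    intro ξ
    simp only [etaPer_periodic η s ξ, fhat_periodic f ξ]
    congr 1
    rw [Complex.exp_eq_exp_iff_exists_int]
    refine ⟨n, ?_⟩
    push_cast
    ring
  have h := hper.intervalIntegral_add_eq 0 (-(1 / 2))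
  rw [zero_add] at h
  rw [h]
  have c : (1 : ℝ) ≤ 2 ^ (4 * s) := one_le_pow₀ (by norm_num)
  have e : ∫ ξ in (-(1 / 2) : ℝ)..(-(1 / 2) + 1), (etaPer η s ξ : ℂ) * fhat f ξ *
      Complex.exp (2 * Real.pi * Complex.I * ξ * n) =
      ∫ ξ in (-(1 / 2) : ℝ)..(-(1 / 2) + 1), (η (2 ^ (4 * s) * ξ) : ℂ) * fhat f ξ *
      Complex.exp (2 * Real.pi * Complex.I * ξ * n) := by
    apply intervalIntegral.integral_congr
    intro ξ hξ
    rw [Set.uIcc_of_le (by norm_num)] at hξ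
    simp only
    rw [etaPer_eq η h0 s ξ (abs_le.mpr ⟨hξ.1, by linarith [hξ.2]⟩)]
  rw [e, intervalIntegral.integral_eq_integral_of_support_subset]
  · unfold osc
    simp
  · intro ξ hξ
    rw [Function.mem_support] at hξ
    have : |ξ| < 1 / 2 := by
      by_contra hcon
      apply hξ
      rw [h0]
      · simp
      · rw [abs_mul, abs_of_nonneg (by positivity)]
        nlinarith [not_lt.mp hcon]
    have := abs_lt.mp this
    exact ⟨this.1, by linarith [this.2]⟩


lemma abstract_weak (F : ℤ → ℂ) (k : ℤ → ℝ) (hk0 : ∀ m, 0 ≤ k m) (hk : Summable k)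
    (Q : ℕ) (hQ : 1 ≤ Q) (r : ℕ) (hF : Summable (fun x : ℤ => ‖F ((Q : ℤ) * x + r)‖))
    (hdom : ∀ (x : ℤ) (j : ℕ), j < Q → ‖F ((Q : ℤ) * x + j + r)‖ₑ ≤
      ∑' y : ℤ, ENNReal.ofReal (k (x - y)) * ‖F ((Q : ℤ) * y + r)‖ₑ)
    (β : ℝ) (h1 : 1 / 2 ≤ β) (h2 : β ≤ 1) (l : ℝ) (hl : 0 < l) (S : Finset ℤ)
    (hS : ∀ x ∈ S, ∃ n : ℕ, l < ‖Mop β (2 ^ n) F ((Q : ℤ) * x + r)‖) :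
    l * S.card ≤ 4 * (∑' m, k m) * ∑' x : ℤ, ‖F ((Q : ℤ) * x + r)‖ := by
  let H : ℤ → ℝ≥0∞ := fun x => ∑' y : ℤ, ENNReal.ofReal (k (x - y)) * ‖F ((Q : ℤ) * y + r)‖ₑ
  have hH : ∑' x, H x = ENNReal.ofReal (∑' m, k m) *
      ENNReal.ofReal (∑' x : ℤ, ‖F ((Q : ℤ) * x + r)‖) := by
    simp only [H]
    rw [ENNReal.tsum_comm]
    have : ∀ y : ℤ, ∑' x : ℤ, ENNReal.ofReal (k (x - y)) * ‖F ((Q : ℤ) * y + r)‖ₑ =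
        ENNReal.ofReal (∑' m, k m) * ‖F ((Q : ℤ) * y + r)‖ₑ := by
      intro y
      rw [ENNReal.tsum_mul_right, ENNReal.ofReal_tsum_of_nonneg hk0 hk]
      congr 1
      exact (Equiv.subRight y).tsum_eq (fun m => ENNReal.ofReal (k m))
    simp only [this]
    rw [ENNReal.tsum_mul_left, ENNReal.ofReal_tsum_of_nonneg (fun _ => norm_nonneg _) hF]
    simp only [ofReal_norm]
  have hw := weak_tsum (fun x => 4 * H x) (ENNReal.ofReal l) S (by
    intro x hx
    obtain ⟨n, hn⟩ := hS x hx
    set N := 2 ^ n with hN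
    have hN1 : 1 ≤ N := Nat.one_le_two_pow
    refine ⟨N / Q, ?_⟩
    have hb := blocks2 (fun m => ‖F (m + r)‖ₑ) H Q hQ hdom x N
    have hm := Mop_bound β h1 h2 N hN1 F ((Q : ℤ) * x + r)
    have hm' : (N : ℝ) * l ≤ 2 * ∑ n ∈ Finset.Icc 1 N, ‖F ((Q : ℤ) * x + n + r)‖ := by
      refine le_trans (by gcongr) (hm.trans_eq ?_)
      congr 1
      refine Finset.sum_congr rfl fun m _ => ?_
      rw [add_right_comm]
    have hm2 : (N : ℝ≥0∞) * ENNReal.ofReal l ≤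
        2 * ∑ n ∈ Finset.Icc 1 N, ‖F ((Q : ℤ) * x + n + r)‖ₑ := by
      have := ENNReal.ofReal_le_ofReal hm'
      rw [ENNReal.ofReal_mul (by positivity), ENNReal.ofReal_mul (by positivity),
        ENNReal.ofReal_sum_of_nonneg (fun _ _ => norm_nonneg _)] at this
      simpa only [ofReal_norm, ENNReal.ofReal_natCast, ENNReal.ofReal_ofNat] using this
    have hN0 : (N : ℝ≥0∞) ≠ 0 := by
      have : N ≠ 0 := by omega
      exact_mod_cast this
    rw [← ENNReal.mul_le_mul_iff_right hN0 (ENNReal.natCast_ne_top N), ← Finset.mul_sum]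
    calc (N : ℝ≥0∞) * (ENNReal.ofReal l * ((N / Q : ℕ) + 1))
        = ((N / Q : ℕ) + 1) * (N * ENNReal.ofReal l) := by ring
      _ ≤ ((N / Q : ℕ) + 1) * (2 * ∑ n ∈ Finset.Icc 1 N, ‖F ((Q : ℤ) * x + n + r)‖ₑ) := by gcongr
      _ = 2 * (((N / Q : ℕ) + 1) * ∑ n ∈ Finset.Icc 1 N, ‖F ((Q : ℤ) * x + n + r)‖ₑ) := by ring
      _ ≤ 2 * (2 * N * ∑ m ∈ Finset.range (N / Q + 1), H (x + m)) := by gcongr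
      _ = N * (4 * ∑ m ∈ Finset.range (N / Q + 1), H (x + m)) := by ring)
  rw [ENNReal.tsum_mul_left, hH] at hw
  have hk' : 0 ≤ ∑' m, k m := tsum_nonneg hk0
  have hF' : 0 ≤ ∑' x : ℤ, ‖F ((Q : ℤ) * x + r)‖ := tsum_nonneg fun _ => norm_nonneg _
  rw [← ENNReal.ofReal_le_ofReal_iff (by positivity), ENNReal.ofReal_mul hl.le,
    ENNReal.ofReal_mul (by positivity), ENNReal.ofReal_mul (by positivity), ENNReal.ofReal_natCast,
    ENNReal.ofReal_ofNat, mul_assoc]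
  exact hw

lemma finite_of_card (E : Set ℤ) (l B : ℝ) (hl : 0 < l)
    (h : ∀ S : Finset ℤ, (∀ x ∈ S, x ∈ E) → l * S.card ≤ B) :
    E.Finite ∧ l * (E.ncard : ℝ) ≤ B := by
  have hfin : E.Finite := by
    by_contra hinf
    obtain ⟨n, hn⟩ := exists_nat_gt (B / l)
    obtain ⟨S, hS, hc⟩ := Set.Infinite.exists_subset_card_eq hinf n
    have := h S (fun x hx => hS hx)
    rw [hc] at this
    rw [div_lt_iff₀ hl] at hn
    linarith
  refine ⟨hfin, ?_⟩
  rw [Set.ncard_eq_toFinset_card E hfin]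
  exact h _ (fun x hx => by simpa using hx)

end S11

/-- Weak `ℓ¹` bound along residue classes for the maximal function of `M_{2^n}^β` applied
to `ℱ⁻¹(η_s f̂)`. -/
theorem stmt_11 (η : ℝ → ℝ) (hη : IsEta η) :
    ∃ C : ℝ, 0 < C ∧
      ∀ (s : ℕ), 1 ≤ s → ∀ (Q : ℕ), 1 ≤ Q → Q ≤ 2 ^ (2 * s) →
        ∀ (r : ℕ), 1 ≤ r → r ≤ Q →
          ∀ (β : ℝ), 1 / 2 ≤ β → β ≤ 1 →
            ∀ (f : ℤ → ℂ), (Function.support f).Finite →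
              ∀ l : ℝ, 0 < l →
                {x : ℤ | ∃ n : ℕ, l < ‖Mop β (2 ^ n)
                    (FinvInt (fun ξ => (etaPer η s ξ : ℂ) * fhat f ξ))
                    ((Q : ℤ) * x + r)‖}.Finite ∧
                l * (({x : ℤ | ∃ n : ℕ, l < ‖Mop β (2 ^ n)
                    (FinvInt (fun ξ => (etaPer η s ξ : ℂ) * fhat f ξ))
                    ((Q : ℤ) * x + r)‖}.ncard : ℝ)) ≤
                  C * ∑' x : ℤ,
                    ‖FinvInt (fun ξ => (etaPer η s ξ : ℂ) * fhat f ξ) ((Q : ℤ) * x + r)‖ := by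
  obtain ⟨hs, -, h1, h0, -⟩ := hη
  have hsC : ContDiff ℝ (⊤ : ℕ∞) (fun ξ => (η ξ : ℂ)) := Complex.ofRealCLM.contDiff.comp hs
  obtain ⟨D, hD, hdec⟩ := S11.osc_decay (fun ξ => (η ξ : ℂ)) hsC
    (by simpa using S11.eta_compact η h0 1 le_rfl (fun _ => 1))
  have hk0 : ∀ m : ℤ, 0 ≤ 3 * D / (1 + (m : ℝ) ^ 2) := fun m => by positivity
  have hk := S11.summable_inv (3 * D)
  have hκ : 0 ≤ ∑' m : ℤ, 3 * D / (1 + (m : ℝ) ^ 2) := tsum_nonneg hk0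
  refine ⟨4 * (∑' m : ℤ, 3 * D / (1 + (m : ℝ) ^ 2)) + 1, by positivity, ?_⟩
  intro s hs1 Q hQ hQs r _ _ β hβ1 hβ2 f hf l hl
  set F := FinvInt (fun ξ => (etaPer η s ξ : ℂ) * fhat f ξ) with hF
  set Φ : ℝ → ℂ := fun ξ => (η (2 ^ (4 * s) * ξ) : ℂ) * fhat f ξ with hΦ
  have hFΦ : ∀ n : ℤ, F n = S11.osc Φ n := fun n => S11.F_eq η h0 s f n
  have c1 : (1 : ℝ) ≤ 2 ^ (4 * s) := one_le_pow₀ (by norm_num)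
  have hΦc : HasCompactSupport Φ := S11.eta_compact η h0 (2 ^ (4 * s)) c1 (fhat f)
  have hΦs : ContDiff ℝ (⊤ : ℕ∞) Φ :=
    (hsC.comp (contDiff_const.mul contDiff_id)).mul (S11.fhat_smooth f hf)
  have hQ0 : (1 : ℝ) ≤ Q := by exact_mod_cast hQ
  have hQR : (Q : ℝ) ≤ 2 ^ (2 * s) := by exact_mod_cast hQs
  have hQ' : ∀ ξ, Φ ξ ≠ 0 → |(Q : ℝ) * ξ| ≤ 1 / 4 := by
    intro ξ hξ
    have a : |(2 : ℝ) ^ (4 * s) * ξ| < 1 / 2 := by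
      by_contra hcon
      apply hξ
      simp only [hΦ]
      rw [h0 _ (not_lt.mp hcon)]
      simp
    rw [abs_mul, abs_of_nonneg (by positivity)] at a
    rw [abs_mul, abs_of_nonneg (by positivity)]
    have b : (2 : ℝ) ≤ 2 ^ (2 * s) := by
      calc (2 : ℝ) = 2 ^ 1 := by norm_num
        _ ≤ 2 ^ (2 * s) := pow_le_pow_right₀ (by norm_num) (by omega)
    have e : (2 : ℝ) ^ (4 * s) = 2 ^ (2 * s) * 2 ^ (2 * s) := by
      rw [← pow_add]; congr 1; omega
    rw [e] at a
    have d : 2 * ((Q : ℝ) * |ξ|) ≤ 2 ^ (2 * s) * (2 ^ (2 * s) * |ξ|) := by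
      gcongr
    linarith
  obtain ⟨D', hD', hdec'⟩ := S11.osc_decay Φ hΦs hΦc
  have hsumF : Summable (fun x : ℤ => ‖F ((Q : ℤ) * x + r)‖) := by
    have base : Summable (fun n : ℤ => ‖F n‖) := by
      refine Summable.of_nonneg_of_le (fun _ => norm_nonneg _) (fun n => ?_) (S11.summable_inv D')
      rw [hFΦ]
      exact hdec' n
    refine base.comp_injective (i := fun x : ℤ => (Q : ℤ) * x + r) ?_
    intro x y hxy
    have hQz : (Q : ℤ) ≠ 0 := by omega
    exact mul_left_cancel₀ hQz (add_right_cancel hxy)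
  have hA : 0 ≤ ∑' x : ℤ, ‖F ((Q : ℤ) * x + r)‖ := tsum_nonneg fun _ => norm_nonneg _
  apply S11.finite_of_card _ _ _ hl
  intro S hS
  have main := S11.abstract_weak F (fun m : ℤ => 3 * D / (1 + (m : ℝ) ^ 2)) hk0 hk Q hQ r hsumF
    (by
      intro x j hj
      have hjQ : (j : ℝ) ≤ Q := by exact_mod_cast hj.le
      have ht1 : (j : ℝ) / Q ≤ 1 := by
        rw [div_le_one (by positivity)]
        exact hjQ
      have sam := S11.sampling η hs h1 h0 D hD hdec Φ hΦs.continuous hΦc Q r hQ' x (j / Q)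
        (by positivity) ht1
      have e : F ((Q : ℤ) * x + j + r) = S11.osc Φ (Q * (x + j / Q) + r) := by
        rw [hFΦ]
        congr 1
        push_cast
        field_simp
      rw [e, sam]
      refine enorm_tsum_le_tsum_enorm.trans (ENNReal.tsum_le_tsum fun y => ?_)
      rw [enorm_mul, hFΦ]
      have e2 : (((Q : ℤ) * y + r : ℤ) : ℝ) = Q * y + r := by push_cast; ring
      rw [e2]
      gcongr
      rw [← ofReal_norm]
      apply ENNReal.ofReal_le_ofReal
      exact (hdec _).trans (S11.shift_bound D hD x y _ (by positivity) ht1))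
    β hβ1 hβ2 l hl S hS
  linarith
end

section
/- There is a constant C > 0 (depending only on η) such that for every s ∈ ℕ, every integer Q with 1 ≤ Q ≤ 2^{2s}, every r ∈ {1, …, Q}, every β ∈ [1/2, 1], and every finitely supported f : ℤ → ℂ, one has ( Σ_{x ∈ ℤ} sup_{n ∈ ℕ₀} |ℱ⁻¹(M̂_{2^n}^β η_s f̂)(Qx + r)|² )^{1/2} ≤ C ( Σ_{x ∈ ℤ} |ℱ⁻¹(η_s f̂)(Qx + r)|² )^{1/2}. -/
open scoped BigOperators

/-- The multiplier `M̂_N^β(ξ) = (1/N) Σ_{n=1}^N ((n^β − (n−1)^β)/β) e^{2πi ξ n}`. -/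
noncomputable def Mhat (β : ℝ) (N : ℕ) (ξ : ℝ) : ℂ :=
  ((N : ℂ))⁻¹ * ∑ n ∈ Finset.Icc 1 N,
    (((((n : ℝ) ^ β - ((n : ℝ) - 1) ^ β) / β) : ℝ) : ℂ) *
      Complex.exp (2 * Real.pi * Complex.I * ξ * n)

/-- one-sided maximal lemma, reversed time -/
theorem hl_aux (b : ℕ → ℝ) (B : ℝ) (hb0 : ∀ k, 0 ≤ b k) (hbB : ∀ k, b k ≤ B) :
    ∃ μ : ℕ → ℝ, (∀ k, 0 ≤ μ k) ∧
      (∀ k L, L ≤ k + 1 → ∑ j ∈ Finset.range L, b (k - j) ≤ L * μ k) ∧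
      ∀ R, ∑ k ∈ Finset.range R, (μ k) ^ 2 ≤ 4 * ∑ k ∈ Finset.range R, (b k) ^ 2 := by
  have hB : 0 ≤ B := (hb0 0).trans (hbB 0)
  let u : ℕ → ℝ → ℝ := fun k => Nat.rec (fun _ => 0) (fun k v l => max 0 (b k - l + v l)) k
  have u0 : ∀ l, u 0 l = 0 := fun l => rfl
  have us : ∀ k l, u (k+1) l = max 0 (b k - l + u k l) := fun k l => rfl
  have unn : ∀ k l, 0 ≤ u k l := by
    intro k l
    cases k with
    | zero => exact le_rfl
    | succ k => rw [us]; exact le_max_left _ _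
  have uc : ∀ k, Continuous (u k) := by
    intro k
    induction k with
    | zero => exact continuous_const
    | succ k ih =>
      have : u (k+1) = fun l => max 0 (b k - l + u k l) := rfl
      rw [this]; fun_prop
  have ua : ∀ k, Antitone (u k) := by
    intro k
    induction k with
    | zero => intro x y _; exact le_rfl
    | succ k ih =>
      intro x y hxy
      rw [us, us]
      have := ih hxy
      exact max_le_max le_rfl (by linarith)
  have uB : ∀ k, u k B = 0 := by
    intro k
    induction k with
    | zero => rfl
    | succ k ih => rw [us, ih]; exact max_eq_left (by linarith [hbB k])
  have ul : ∀ L k l, L ≤ k + 1 → ∑ j ∈ Finset.range L, (b (k - j) - l) ≤ u (k+1) l := by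
    intro L
    induction L with
    | zero => intro k l _; simpa using unn (k+1) l
    | succ L ih =>
      intro k l hL
      rw [Finset.sum_range_succ', us]
      refine le_trans ?_ (le_max_right _ _)
      have : ∑ j ∈ Finset.range L, (b (k - (j+1)) - l) ≤ u k l := by
        cases k with
        | zero =>
          have : L = 0 := by omega
          subst this; simpa using unn 0 l
        | succ k =>
          refine le_trans (le_of_eq ?_) (ih k l (by omega))
          refine Finset.sum_congr rfl fun j _ => ?_
          rw [Nat.add_sub_add_right]
      simp only [Nat.sub_zero]
      linarith
  have ivt : ∀ k, ∃ m ∈ Set.Icc 0 B, b k - m + u k m = 0 := by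
    intro k
    have hc : ContinuousOn (fun m => b k - m + u k m) (Set.Icc 0 B) := by
      have := uc k
      fun_prop
    have := intermediate_value_Icc' hB hc
    have h0 : (0:ℝ) ∈ Set.Icc (b k - B + u k B) (b k - 0 + u k 0) := by
      refine ⟨?_, ?_⟩
      · rw [uB]; linarith [hbB k]
      · linarith [hb0 k, unn k 0]
    obtain ⟨m, hm, h⟩ := this h0
    exact ⟨m, hm, h⟩
  choose μ hμ hμ0 using ivt
  refine ⟨μ, fun k => (hμ k).1, ?_, ?_⟩
  · intro k L hL
    have h := ul L k (μ k) hL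
    rw [us, hμ0, max_self, Finset.sum_sub_distrib] at h
    simpa using h
  · have ii : ∀ k x y, IntervalIntegrable (u k) MeasureTheory.volume x y :=
      fun k x y => (uc k).intervalIntegrable _ _
    have step : ∀ k, (∫ l in (0:ℝ)..B, u (k+1) l) + (μ k)^2/4 ≤ (∫ l in (0:ℝ)..B, u k l) + (b k)^2 := by
      intro k
      have e1 : (∫ l in (0:ℝ)..(μ k), u (k+1) l) = ∫ l in (0:ℝ)..(μ k), (b k - l + u k l) := by
        refine intervalIntegral.integral_congr fun l hl => ?_
        rw [Set.uIcc_of_le (hμ k).1] at hl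
        simp only [us]
        refine max_eq_right ?_
        have := ua k hl.2
        linarith [hμ0 k, hl.2]
      have e2 : (∫ l in (μ k)..B, u (k+1) l) = 0 := by
        rw [intervalIntegral.integral_congr (g := fun _ => (0:ℝ))]
        · simp
        intro l hl
        rw [Set.uIcc_of_le (hμ k).2] at hl
        simp only [us]
        refine max_eq_left ?_
        have := ua k hl.1
        linarith [hμ0 k, hl.1]
      have e3 : (∫ l in (0:ℝ)..(μ k), (b k - l + u k l)) = b k * μ k - (μ k)^2/2 + ∫ l in (0:ℝ)..(μ k), u k l := by
        rw [intervalIntegral.integral_add (by apply Continuous.intervalIntegrable; fun_prop) (ii _ _ _),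
          intervalIntegral.integral_sub (by simp) (by simp)]
        simp
        ring
      have e4 : 0 ≤ (∫ l in (μ k)..B, u k l) :=
        intervalIntegral.integral_nonneg (hμ k).2 fun l _ => unn k l
      rw [← intervalIntegral.integral_add_adjacent_intervals (ii (k+1) 0 (μ k)) (ii (k+1) (μ k) B),
        ← intervalIntegral.integral_add_adjacent_intervals (ii k 0 (μ k)) (ii k (μ k) B), e1, e2, e3]
      nlinarith [sq_nonneg (b k - μ k / 2)]
    intro R
    have : (∫ l in (0:ℝ)..B, u R l) + (∑ k ∈ Finset.range R, (μ k)^2)/4 ≤ ∑ k ∈ Finset.range R, (b k)^2 := by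
      induction R with
      | zero => simp [u0]
      | succ R ih =>
        rw [Finset.sum_range_succ, Finset.sum_range_succ]
        linarith [step R]
    have h0 : 0 ≤ (∫ l in (0:ℝ)..B, u R l) :=
      intervalIntegral.integral_nonneg hB fun l _ => unn R l
    linarith

theorem hl_int (H : ℤ → ℝ) (hH : ∀ x, 0 ≤ H x) (hs : Summable fun x => (H x)^2)
    (s : Finset ℤ) (L : ℤ → ℕ) (hL : ∀ x, 1 ≤ L x) :
    ∑ x ∈ s, ((∑ j ∈ Finset.range (L x), H (x + j)) / L x)^2 ≤ 4 * ∑' x, (H x)^2 := by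
  obtain ⟨T, hT⟩ : ∃ T : ℤ, ∀ x ∈ s, x + L x ≤ T := by
    obtain ⟨T, hT⟩ := (s.image fun x => x + (L x : ℤ)).bddAbove
    exact ⟨T, fun x hx => hT (by simpa using ⟨x, hx, rfl⟩)⟩
  obtain ⟨R, hR⟩ : ∃ R : ℕ, ∀ x ∈ s, (T - x).toNat < R := by
    obtain ⟨T, hT⟩ := (s.image fun x => (T - x).toNat).bddAbove
    exact ⟨T+1, fun x hx => Nat.lt_succ_of_le (hT (by simpa using ⟨x, hx, rfl⟩))⟩
  set b : ℕ → ℝ := fun k => H (T - k) with hb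
  have hbd : ∀ x, H x ≤ Real.sqrt (∑' x, (H x)^2) := fun x =>
    Real.le_sqrt_of_sq_le (hs.le_tsum x fun _ _ => sq_nonneg _)
  obtain ⟨μ, hμ0, hμ1, hμ2⟩ := hl_aux b _ (fun k => hH _) (fun k => hbd _)
  have inj : Set.InjOn (fun x => (T - x).toNat) (s : Set ℤ) := by
    intro x hx y hy h
    have := hT x hx; have := hT y hy
    simp only at h
    omega
  calc ∑ x ∈ s, ((∑ j ∈ Finset.range (L x), H (x + j)) / L x)^2
      ≤ ∑ x ∈ s, (μ (T-x).toNat)^2 := by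
        refine Finset.sum_le_sum fun x hx => ?_
        have hLp : (0:ℝ) < L x := by exact_mod_cast hL x
        refine pow_le_pow_left₀ (div_nonneg (Finset.sum_nonneg fun _ _ => hH _) hLp.le) ?_ 2
        rw [div_le_iff₀' hLp]
        have hTx := hT x hx
        refine le_trans (le_of_eq ?_) (hμ1 (T-x).toNat (L x) (by omega))
        refine Finset.sum_congr rfl fun j hj => ?_
        rw [hb]
        simp only
        congr 1
        have := Finset.mem_range.1 hj
        omega
    _ = ∑ k ∈ s.image (fun x => (T - x).toNat), (μ k)^2 :=
        (Finset.sum_image (f := fun k => (μ k)^2) inj).symm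
    _ ≤ ∑ k ∈ Finset.range R, (μ k)^2 := by
        refine Finset.sum_le_sum_of_subset_of_nonneg ?_ fun _ _ _ => sq_nonneg _
        intro k hk
        obtain ⟨x, hx, rfl⟩ := Finset.mem_image.1 hk
        exact Finset.mem_range.2 (hR x hx)
    _ ≤ 4 * ∑ k ∈ Finset.range R, (b k)^2 := hμ2 R
    _ ≤ 4 * ∑' x, (H x)^2 := by
        gcongr
        have : ∑ k ∈ Finset.range R, (b k)^2 = ∑ x ∈ (Finset.range R).image (fun k : ℕ => T - k), (H x)^2 := by
          rw [Finset.sum_image]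
          intro x _ y _ h
          simp only at h
          omega
        rw [this]
        exact hs.sum_le_tsum _ fun _ _ => sq_nonneg _

theorem sup_aux (a : ℤ → ℕ → ℝ) (K : ℝ) (hbd : ∀ x, BddAbove (Set.range (a x)))
    (s : Finset ℤ) (h : ∀ n : ℤ → ℕ, ∑ x ∈ s, (a x (n x))^2 ≤ K) :
    ∑ x ∈ s, (⨆ n, a x n)^2 ≤ K := by
  have hch : ∀ (m : ℕ) (x : ℤ), ∃ n, (⨆ n, a x n) - 1/((m:ℝ)+1) < a x n := by
    intro m x
    refine exists_lt_of_lt_ciSup ?_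
    have : (0:ℝ) < 1/((m:ℝ)+1) := by positivity
    linarith
  choose n hn using hch
  have ht : ∀ x, Filter.Tendsto (fun m => a x (n m x)) Filter.atTop (nhds (⨆ n, a x n)) := by
    intro x
    refine tendsto_of_tendsto_of_tendsto_of_le_of_le (g := fun m : ℕ => (⨆ n, a x n) - 1/((m:ℝ)+1)) ?_ tendsto_const_nhds
      (fun m => (hn m x).le) (fun m => le_ciSup (hbd x) _)
    simpa using tendsto_const_nhds.sub (tendsto_one_div_add_atTop_nhds_zero_nat (𝕜 := ℝ))
  have := tendsto_finsetSum s fun x _ => (ht x).pow 2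
  exact le_of_tendsto this (Filter.Eventually.of_forall fun m => h (n m))

theorem planch (G : ℝ → ℂ) (hG : Continuous G) (Q : ℕ) (hQ : 1 ≤ Q) (c : ℤ) :
    HasSum (fun x : ℤ => ‖∫ ξ in (-(1/(2*(Q:ℝ))))..(1/(2*(Q:ℝ))),
        G ξ * Complex.exp (2 * Real.pi * Complex.I * ξ * (((Q:ℤ)*x + c : ℤ) : ℂ))‖ ^ 2)
      ((Q:ℝ)⁻¹ * ∫ ξ in (-(1/(2*(Q:ℝ))))..(1/(2*(Q:ℝ))), ‖G ξ‖^2) := by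
  have hQ0 : (0:ℝ) < Q := by exact_mod_cast hQ
  have hQc : (Q:ℂ) ≠ 0 := by exact_mod_cast hQ0.ne'
  have hp : 0 < 1/(2*(Q:ℝ)) := by positivity
  have hab : (-(1/(2*(Q:ℝ)))) < (1/(2*(Q:ℝ))) := by linarith
  have hba : (1/(2*(Q:ℝ))) - (-(1/(2*(Q:ℝ)))) = (Q:ℝ)⁻¹ := by field_simp; ring
  set G' : ℝ → ℂ := fun ξ => G ξ * Complex.exp (2 * Real.pi * Complex.I * ξ * c) with hG'
  have hGc : Continuous G' := by fun_prop
  have hL : MeasureTheory.MemLp G' 2 (MeasureTheory.volume.restrict (Set.Ioc (-(1/(2*(Q:ℝ)))) (1/(2*(Q:ℝ))))) := by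
    obtain ⟨K, hK⟩ := (isCompact_Icc (a := -(1/(2*(Q:ℝ)))) (b := 1/(2*(Q:ℝ)))).exists_bound_of_continuousOn hGc.continuousOn
    refine MeasureTheory.MemLp.of_bound hGc.aestronglyMeasurable K ?_
    filter_upwards [MeasureTheory.ae_restrict_mem measurableSet_Ioc] with x hx
    exact hK x (Set.Ioc_subset_Icc_self hx)
  have h := hasSum_sq_fourierCoeffOn hab hL
  have hn : ∀ ξ, ‖G' ξ‖ = ‖G ξ‖ := by
    intro ξ
    have : Complex.exp (2 * Real.pi * Complex.I * ξ * c) = Complex.exp ((2 * Real.pi * ξ * c : ℝ) * Complex.I) := by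
      congr 1; push_cast; ring
    rw [hG']; simp only
    rw [norm_mul, this, Complex.norm_exp_ofReal_mul_I, mul_one]
  simp only [hn] at h
  have h2 := ((Equiv.neg ℤ).hasSum_iff.2 h).mul_left ((Q:ℝ)⁻¹^2)
  have e : (Q:ℝ)⁻¹^2 * (((1/(2*(Q:ℝ))) - (-(1/(2*(Q:ℝ)))))⁻¹ • ∫ ξ in (-(1/(2*(Q:ℝ))))..(1/(2*(Q:ℝ))), ‖G ξ‖^2)
     = ((Q:ℝ)⁻¹ * ∫ ξ in (-(1/(2*(Q:ℝ))))..(1/(2*(Q:ℝ))), ‖G ξ‖^2) := by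
    rw [hba, smul_eq_mul]; field_simp
  rw [e] at h2
  suffices hx : ∀ x : ℤ, ‖∫ ξ in (-(1/(2*(Q:ℝ))))..(1/(2*(Q:ℝ))),
        G ξ * Complex.exp (2 * Real.pi * Complex.I * ξ * (((Q:ℤ)*x + c : ℤ) : ℂ))‖ ^ 2 =
        (Q:ℝ)⁻¹ ^ 2 * ‖fourierCoeffOn hab G' (-x)‖ ^ 2 by
    rw [funext hx]
    exact h2
  intro x
  rw [fourierCoeffOn_eq_integral, norm_smul, mul_pow, ← mul_assoc, hba]
  have : (Q:ℝ)⁻¹ ^ 2 * ‖1/(Q:ℝ)⁻¹‖^2 = 1 := by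
    rw [one_div, inv_inv, Real.norm_of_nonneg hQ0.le]; field_simp
  rw [this, one_mul]
  congr 2
  refine intervalIntegral.integral_congr fun ξ _ => ?_
  simp only [hG', fourier_coe_apply, smul_eq_mul]
  rw [mul_left_comm, ← Complex.exp_add]
  congr 2
  push_cast
  field_simp

theorem fhat_per (f : ℤ → ℂ) : Function.Periodic (fhat f) 1 := by
  intro ξ
  unfold fhat
  refine tsum_congr fun n => ?_
  congr 1
  refine Complex.exp_eq_exp_iff_exists_int.2 ⟨-n, ?_⟩
  push_cast; ring

theorem fhat_cont (f : ℤ → ℂ) (hf : (Function.support f).Finite) : Continuous (fhat f) := by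
  have : fhat f = fun ξ : ℝ => ∑ n ∈ hf.toFinset, f n * Complex.exp (-(2 * Real.pi * Complex.I * ξ * n)) := by
    funext ξ
    unfold fhat
    refine tsum_eq_sum fun n hn => ?_
    have : f n = 0 := by simpa using hn
    simp [this]
  rw [this]
  fun_prop

theorem exp_per (y : ℤ) : Function.Periodic (fun ξ : ℝ => Complex.exp (2 * Real.pi * Complex.I * ξ * y)) 1 := by
  intro ξ
  refine Complex.exp_eq_exp_iff_exists_int.2 ⟨y, ?_⟩
  push_cast; ring

theorem etaPer_per (η : ℝ → ℝ) (s : ℕ) : Function.Periodic (etaPer η s) 1 := by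
  intro ξ
  unfold etaPer
  rw [← (Equiv.addRight (1:ℤ)).tsum_eq]
  refine tsum_congr fun k => ?_
  congr 2
  simp

theorem etaPer_eq (η : ℝ → ℝ) (h0 : ∀ ξ : ℝ, 1 / 2 ≤ |ξ| → η ξ = 0) (s : ℕ) (ξ : ℝ) (hξ : |ξ| ≤ 1/2) :
    etaPer η s ξ = η (2 ^ (4 * s) * ξ) := by
  unfold etaPer
  rw [tsum_eq_single 0]
  · simp
  intro k hk
  apply h0
  have h1 : (1:ℝ) ≤ |(k:ℝ)| := by exact_mod_cast Int.one_le_abs hk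
  have h2 : |(k:ℝ)| ≤ |ξ - k| + |ξ| := by
    have := abs_sub_abs_le_abs_sub (k:ℝ) ξ
    rw [abs_sub_comm (k:ℝ) ξ] at this
    linarith
  have h3 : (1:ℝ) ≤ 2 ^ (4*s) := one_le_pow₀ (by norm_num)
  rw [abs_mul, abs_of_pos (by positivity : (0:ℝ) < 2 ^ (4*s))]
  nlinarith [abs_nonneg (ξ - k)]

theorem Finv_eq (η : ℝ → ℝ) (h0 : ∀ ξ : ℝ, 1 / 2 ≤ |ξ| → η ξ = 0) (s Q : ℕ)
    (hQ : 1 ≤ Q) (hQs : Q ≤ 2 ^ (2 * s)) (f : ℤ → ℂ) (P : ℝ → ℂ) (hP : Function.Periodic P 1) (y : ℤ) :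
    FinvInt (fun ξ => P ξ * (etaPer η s ξ : ℂ) * fhat f ξ) y =
      ∫ ξ in (-(1/(2*(Q:ℝ))))..(1/(2*(Q:ℝ))), P ξ * ((η (2 ^ (4 * s) * ξ) : ℂ) * fhat f ξ) *
        Complex.exp (2 * Real.pi * Complex.I * ξ * y) := by
  have hQ1 : (1:ℝ) ≤ Q := by exact_mod_cast hQ
  have hQ0 : (0:ℝ) < Q := by linarith
  unfold FinvInt
  have per : Function.Periodic (fun ξ : ℝ => P ξ * (etaPer η s ξ : ℂ) * fhat f ξ *
      Complex.exp (2 * Real.pi * Complex.I * ξ * y)) 1 := by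
    intro ξ
    have e := exp_per y ξ
    simp only at e
    simp only [hP ξ, etaPer_per η s ξ, fhat_per f ξ, e]
  have := per.intervalIntegral_add_eq 0 (-(1/2))
  rw [zero_add] at this
  rw [this]
  have e1 : ∫ ξ in (-(1/2):ℝ)..(-(1/2)+1), P ξ * (etaPer η s ξ : ℂ) * fhat f ξ *
      Complex.exp (2 * Real.pi * Complex.I * ξ * y) = ∫ ξ in (-(1/2):ℝ)..(1/2), P ξ * ((η (2 ^ (4 * s) * ξ) : ℂ) * fhat f ξ) *
        Complex.exp (2 * Real.pi * Complex.I * ξ * y) := by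
    rw [show (-(1/2):ℝ)+1 = 1/2 by norm_num]
    refine intervalIntegral.integral_congr fun ξ hξ => ?_
    rw [Set.uIcc_of_le (by norm_num)] at hξ
    rw [etaPer_eq η h0 s ξ (abs_le.2 hξ)]
    ring
  rw [e1]
  have supp : ∀ h : ℝ, 1/(2*(Q:ℝ)) ≤ h → Function.support (fun ξ : ℝ => P ξ * ((η (2 ^ (4 * s) * ξ) : ℂ) * fhat f ξ) *
        Complex.exp (2 * Real.pi * Complex.I * ξ * y)) ⊆ Set.Ioc (-h) h := by
    intro h hh ξ hξ
    by_contra hc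
    apply hξ
    have hab : 1/(2*(Q:ℝ)) ≤ |ξ| := by
      refine hh.trans ?_
      by_contra hlt
      rw [not_le, abs_lt] at hlt
      exact hc ⟨hlt.1, hlt.2.le⟩
    have : η (2 ^ (4 * s) * ξ) = 0 := by
      apply h0
      rw [abs_mul, abs_of_pos (by positivity : (0:ℝ) < 2 ^ (4*s))]
      have h3 : (Q:ℝ) ≤ 2 ^ (4*s) := by
        have : Q ≤ 2 ^ (4*s) := hQs.trans (Nat.pow_le_pow_right (by norm_num) (by omega))
        exact_mod_cast this
      calc (1:ℝ)/2 = Q * (1/(2*(Q:ℝ))) := by field_simp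
        _ ≤ 2 ^ (4*s) * |ξ| := by gcongr
    simp [this]
  rw [intervalIntegral.integral_eq_integral_of_support_subset (supp (1/2) (by gcongr; linarith)),
    intervalIntegral.integral_eq_integral_of_support_subset (supp _ le_rfl)]

theorem weight_bd (β : ℝ) (h1 : 1/2 ≤ β) (h2 : β ≤ 1) (n : ℕ) (hn : 1 ≤ n) :
    ‖((((((n : ℝ) ^ β - ((n : ℝ) - 1) ^ β) / β) : ℝ) : ℂ))‖ ≤ 2 := by
  have hn1 : (1:ℝ) ≤ n := by exact_mod_cast hn
  have hm : (0:ℝ) ≤ (n:ℝ) - 1 := by linarith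
  have a1 : ((n : ℝ) - 1) ^ β ≤ (n:ℝ) ^ β := Real.rpow_le_rpow hm (by linarith) (by linarith)
  have a2 : (n:ℝ) ^ β ≤ ((n : ℝ) - 1) ^ β + 1 := by
    have := Real.rpow_add_le_add_rpow hm (zero_le_one) (by linarith) h2
    simpa using this
  rw [Complex.norm_real, Real.norm_of_nonneg (div_nonneg (by linarith) (by linarith)), div_le_iff₀ (by linarith)]
  linarith

theorem sum_block (H : ℤ → ℝ) (x : ℤ) (Q : ℕ) (hQ : 1 ≤ Q) (L : ℕ) :
    ∑ n ∈ Finset.range (Q * L), H (x + (n / Q : ℕ)) = Q * ∑ m ∈ Finset.range L, H (x + m) := by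
  induction L with
  | zero => simp
  | succ L ih =>
    rw [Nat.mul_succ, Finset.sum_range_add, ih, Finset.sum_range_succ, mul_add]
    congr 1
    rw [Finset.sum_congr rfl (g := fun _ => H (x + L)), Finset.sum_const, Finset.card_range, nsmul_eq_mul]
    intro j hj
    rw [Nat.mul_add_div (by omega), Nat.div_eq_of_lt (Finset.mem_range.1 hj), Nat.add_zero]

set_option maxHeartbeats 400000 in
/-- `ℓ²` bound along residue classes for the maximal function of the multipliers
`M̂_{2^n}^β η_s`. -/
theorem stmt_12 (η : ℝ → ℝ) (hη : IsEta η) :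
    ∃ C : ℝ, 0 < C ∧
      ∀ (s : ℕ), 1 ≤ s → ∀ (Q : ℕ), 1 ≤ Q → Q ≤ 2 ^ (2 * s) →
        ∀ (r : ℕ), 1 ≤ r → r ≤ Q →
          ∀ (β : ℝ), 1 / 2 ≤ β → β ≤ 1 →
            ∀ (f : ℤ → ℂ), (Function.support f).Finite →
              Real.sqrt (∑' x : ℤ,
                  (⨆ n : ℕ, ‖FinvInt
                    (fun ξ => Mhat β (2 ^ n) ξ * (etaPer η s ξ : ℂ) * fhat f ξ)
                    ((Q : ℤ) * x + r)‖) ^ 2) ≤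
                C * Real.sqrt (∑' x : ℤ,
                  ‖FinvInt (fun ξ => (etaPer η s ξ : ℂ) * fhat f ξ)
                    ((Q : ℤ) * x + r)‖ ^ 2) := by
  obtain ⟨hsm, -, -, h0, -⟩ := hη
  have hηc : Continuous η := hsm.continuous
  refine ⟨40, by norm_num, ?_⟩
  intro s hs Q hQ hQs r hr1 hrQ β hβ1 hβ2 f hf
  have hQ1 : (1:ℝ) ≤ Q := by exact_mod_cast hQ
  have hQ0 : (0:ℝ) < Q := by linarith
  have hfc := fhat_cont f hf
  set h : ℝ := 1/(2*(Q:ℝ)) with hh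
  have hh0 : 0 < h := by positivity
  set G0 : ℝ → ℂ := fun ξ => (η (2 ^ (4 * s) * ξ) : ℂ) * fhat f ξ with hG0
  have hG0c : Continuous G0 := by fun_prop
  set G1 : ℝ → ℂ := fun ξ => G0 ξ * (Complex.exp (2 * Real.pi * Complex.I * ξ) - 1) with hG1
  have hG1c : Continuous G1 := by fun_prop
  set F : ℤ → ℂ := fun y => ∫ ξ in (-h)..h, G0 ξ * Complex.exp (2 * Real.pi * Complex.I * ξ * (y:ℂ)) with hFdef
  set D : ℤ → ℂ := fun y => ∫ ξ in (-h)..h, G1 ξ * Complex.exp (2 * Real.pi * Complex.I * ξ * (y:ℂ)) with hDdef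
  set E : ℝ := (Q:ℝ)⁻¹ * ∫ ξ in (-h)..h, ‖G0 ξ‖^2 with hE
  set E1 : ℝ := (Q:ℝ)⁻¹ * ∫ ξ in (-h)..h, ‖G1 ξ‖^2 with hE1
  have hF : ∀ c : ℤ, HasSum (fun x : ℤ => ‖F ((Q:ℤ)*x + c)‖^2) E := fun c => planch G0 hG0c Q hQ c
  have hD : ∀ c : ℤ, HasSum (fun x : ℤ => ‖D ((Q:ℤ)*x + c)‖^2) E1 := fun c => planch G1 hG1c Q hQ c
  have hDF : ∀ y, F (y+1) = F y + D y := by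
    intro y
    simp only [hFdef, hDdef]
    rw [← intervalIntegral.integral_add (Continuous.intervalIntegrable (by fun_prop) _ _)
      (Continuous.intervalIntegrable (by fun_prop) _ _)]
    refine intervalIntegral.integral_congr fun ξ _ => ?_
    simp only [hG1]
    push_cast
    rw [mul_add, Complex.exp_add, mul_one]
    ring
  have hE0 : 0 ≤ E := (hF 0).nonneg fun _ => sq_nonneg _
  have hG10 : ∀ ξ, ‖G1 ξ‖^2 ≤ (Real.pi / 2^(4*s))^2 * ‖G0 ξ‖^2 := by
    intro ξ
    rw [← mul_pow]
    refine pow_le_pow_left₀ (norm_nonneg _) ?_ 2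
    by_cases hξ : 1/2 ≤ |2^(4*s) * ξ|
    · have : G0 ξ = 0 := by simp [hG0, h0 _ hξ]
      simp [hG1, this]
    · rw [not_le, abs_mul, abs_of_pos (by positivity : (0:ℝ) < 2 ^ (4*s))] at hξ
      simp only [hG1]
      rw [norm_mul, mul_comm]
      gcongr
      have e : Complex.exp (2 * Real.pi * Complex.I * ξ) = Complex.exp (Complex.I * ((2 * Real.pi * ξ : ℝ) : ℂ)) := by
        congr 1; push_cast; ring
      rw [e]
      refine Real.norm_exp_I_mul_ofReal_sub_one_le.trans ?_
      rw [Real.norm_eq_abs, abs_mul, abs_of_pos Real.two_pi_pos, le_div_iff₀ (by positivity)]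
      nlinarith [Real.pi_pos]
  have hE1E : E1 ≤ (Real.pi / 2^(4*s))^2 * E := by
    have hi : (∫ ξ in (-h)..h, ‖G1 ξ‖^2) ≤ ∫ ξ in (-h)..h, (Real.pi / 2^(4*s))^2 * ‖G0 ξ‖^2 :=
      intervalIntegral.integral_mono (by linarith) (Continuous.intervalIntegrable (by fun_prop) _ _)
        (Continuous.intervalIntegrable (by fun_prop) _ _) hG10
    rw [intervalIntegral.integral_const_mul] at hi
    have hQi : (0:ℝ) ≤ (Q:ℝ)⁻¹ := by positivity
    rw [hE1, hE, mul_left_comm]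
    exact mul_le_mul_of_nonneg_left hi hQi
  clear_value E E1 F D G0 G1
  have hE1Q : (Q:ℝ)^2 * E1 ≤ 10 * E := by
    have hQs' : (Q:ℝ)^2 ≤ 2^(4*s) := by
      have : Q^2 ≤ 2^(4*s) := (Nat.pow_le_pow_left hQs 2).trans (by rw [← pow_mul]; exact Nat.pow_le_pow_right (by norm_num) (by omega))
      exact_mod_cast this
    have h3 : (1:ℝ) ≤ 2 ^ (4*s) := one_le_pow₀ (by norm_num)
    calc (Q:ℝ)^2 * E1 ≤ 2^(4*s) * ((Real.pi / 2^(4*s))^2 * E) := by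
          refine mul_le_mul hQs' hE1E ((hD 0).nonneg fun _ => sq_nonneg _) (by positivity)
      _ = (Real.pi^2 / 2^(4*s)) * E := by field_simp
      _ ≤ 10 * E := by
          gcongr
          rw [div_le_iff₀ (by positivity)]
          nlinarith [Real.pi_pos, Real.pi_lt_d2]
  set H : ℤ → ℝ := fun x => ‖F ((Q:ℤ)*x + r)‖ + ∑ j ∈ Finset.range Q, ‖D ((Q:ℤ)*x + (r + j : ℤ))‖ with hH
  have hH0 : ∀ x, 0 ≤ H x := fun x =>
    add_nonneg (norm_nonneg _) (Finset.sum_nonneg fun _ _ => norm_nonneg _)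
  have hBs : HasSum (fun x : ℤ => 2 * ‖F ((Q:ℤ)*x + r)‖^2 + 2 * (Q * ∑ j ∈ Finset.range Q, ‖D ((Q:ℤ)*x + (r + j : ℤ))‖^2))
      (2 * E + 2 * (Q * ∑ j ∈ Finset.range Q, E1)) := by
    have d1 : HasSum (fun x : ℤ => ∑ j ∈ Finset.range Q, ‖D ((Q:ℤ)*x + (r + j : ℤ))‖^2)
        (∑ j ∈ Finset.range Q, E1) := by
      apply hasSum_sum
      intro j _
      exact hD ((r:ℤ) + (j:ℤ))
    have d2 := (d1.mul_left (Q:ℝ)).mul_left 2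
    have d3 := (hF (r:ℤ)).mul_left 2
    exact d3.add d2
  have hHB : ∀ x, (H x)^2 ≤ 2 * ‖F ((Q:ℤ)*x + r)‖^2 + 2 * (Q * ∑ j ∈ Finset.range Q, ‖D ((Q:ℤ)*x + (r + j : ℤ))‖^2) := by
    intro x
    have c1 := sq_sum_le_card_mul_sum_sq (s := Finset.range Q) (f := fun j : ℕ => ‖D ((Q:ℤ)*x + (r + j : ℤ))‖)
    rw [Finset.card_range] at c1
    simp only [hH]
    nlinarith [sq_nonneg (‖F ((Q:ℤ)*x + r)‖ - ∑ j ∈ Finset.range Q, ‖D ((Q:ℤ)*x + (r + j : ℤ))‖)]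
  have hHs : Summable fun x => (H x)^2 := Summable.of_nonneg_of_le (fun _ => sq_nonneg _) hHB hBs.summable
  have hHE : ∑' x, (H x)^2 ≤ 22 * E := by
    refine (Summable.tsum_le_tsum hHB hHs hBs.summable).trans ?_
    rw [hBs.tsum_eq, Finset.sum_const, Finset.card_range, nsmul_eq_mul]
    linarith
  have hFH : ∀ x (j : ℕ), j ≤ Q → ‖F ((Q:ℤ)*x + r + j)‖ ≤ H x := by
    intro x j hj
    have : ∀ j : ℕ, ‖F ((Q:ℤ)*x + r + j)‖ ≤ ‖F ((Q:ℤ)*x + r)‖ + ∑ i ∈ Finset.range j, ‖D ((Q:ℤ)*x + (r + i : ℤ))‖ := by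
      intro j
      induction j with
      | zero => simp
      | succ j ih =>
        rw [Finset.sum_range_succ]
        push_cast
        rw [← add_assoc, hDF]
        refine (norm_add_le _ _).trans ?_
        rw [← add_assoc ((Q:ℤ)*x) (r:ℤ) (j:ℤ)]
        linarith
    refine (this j).trans ?_
    simp only [hH]
    gcongr
  have hFn : ∀ x (n : ℕ), ‖F ((Q:ℤ)*x + r + n)‖ ≤ H (x + (n / Q : ℕ)) := by
    intro x n
    have := hFH (x + (n / Q : ℕ)) (n % Q) (Nat.mod_lt _ hQ).le
    convert this using 3
    have : (n:ℤ) = Q * (n / Q : ℕ) + (n % Q : ℕ) := by exact_mod_cast (Nat.div_add_mod n Q).symm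
    rw [mul_add]
    linarith
  have hFinv : ∀ y, FinvInt (fun ξ => (etaPer η s ξ : ℂ) * fhat f ξ) y = F y := by
    intro y
    have := Finv_eq η h0 s Q hQ hQs f (fun _ => 1) (fun _ => rfl) y
    rw [hFdef, hG0, hh]
    simpa only [one_mul] using this
  have hMinv : ∀ N y, FinvInt (fun ξ => Mhat β N ξ * (etaPer η s ξ : ℂ) * fhat f ξ) y =
      ((N : ℂ))⁻¹ * ∑ n ∈ Finset.Icc 1 N,
        (((((n : ℝ) ^ β - ((n : ℝ) - 1) ^ β) / β) : ℝ) : ℂ) * F (y + n) := by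
    intro N y
    have hper : Function.Periodic (Mhat β N) 1 := by
      intro ξ
      unfold Mhat
      congr 1
      refine Finset.sum_congr rfl fun n _ => ?_
      congr 1
      exact exp_per n ξ
    rw [Finv_eq η h0 s Q hQ hQs f _ hper y]
    simp only [hFdef, ← intervalIntegral.integral_const_mul]
    rw [← intervalIntegral.integral_finsetSum fun n _ => Continuous.intervalIntegrable (by fun_prop) _ _,
      ← intervalIntegral.integral_const_mul]
    refine intervalIntegral.integral_congr fun ξ _ => ?_
    simp only [Mhat, hG0]
    rw [mul_assoc, mul_assoc, Finset.sum_mul]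
    congr 1
    refine Finset.sum_congr rfl fun n _ => ?_
    push_cast
    rw [mul_add, Complex.exp_add]
    ring
  have key : ∀ x (N : ℕ), 1 ≤ N → ∃ L : ℕ, 1 ≤ L ∧
      ‖FinvInt (fun ξ => Mhat β N ξ * (etaPer η s ξ : ℂ) * fhat f ξ) ((Q:ℤ)*x + r)‖ ≤
        4 * ((∑ j ∈ Finset.range L, H (x + j)) / L) := by
    intro x N hN
    have hN0 : (0:ℝ) < N := by exact_mod_cast hN
    have hb : ‖FinvInt (fun ξ => Mhat β N ξ * (etaPer η s ξ : ℂ) * fhat f ξ) ((Q:ℤ)*x + r)‖ ≤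
        (N:ℝ)⁻¹ * (2 * ∑ n ∈ Finset.Icc 1 N, H (x + (n / Q : ℕ))) := by
      rw [hMinv, norm_mul, norm_inv, Complex.norm_natCast]
      gcongr
      rw [Finset.mul_sum]
      refine norm_sum_le_of_le _ fun n hn => ?_
      rw [norm_mul]
      exact mul_le_mul (weight_bd β hβ1 hβ2 n (Finset.mem_Icc.1 hn).1) (hFn x n) (norm_nonneg _) (by norm_num)
    by_cases hNQ : N < Q
    · refine ⟨1, le_rfl, hb.trans ?_⟩
      rw [Finset.sum_congr rfl (g := fun _ => H x)]
      · rw [Finset.sum_const, Nat.card_Icc, nsmul_eq_mul]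
        simp
        field_simp
        linarith [hH0 x]
      · intro n hn
        rw [Nat.div_eq_of_lt (by have := (Finset.mem_Icc.1 hn).2; omega)]
        simp
    · rw [not_lt] at hNQ
      refine ⟨N / Q + 1, Nat.le_add_left _ _, hb.trans ?_⟩
      have hlt : N < Q * (N/Q + 1) := by
        have := Nat.div_add_mod N Q
        have := Nat.mod_lt N hQ
        rw [mul_add, mul_one]; omega
      have b1 : ∑ n ∈ Finset.Icc 1 N, H (x + (n / Q : ℕ)) ≤ Q * ∑ m ∈ Finset.range (N/Q+1), H (x + m) := by
        rw [← sum_block H x Q hQ]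
        refine Finset.sum_le_sum_of_subset_of_nonneg ?_ fun _ _ _ => hH0 _
        intro n hn
        have := (Finset.mem_Icc.1 hn).2
        exact Finset.mem_range.2 (by omega)
      have b2 : (Q:ℝ) * ((N/Q + 1 : ℕ) : ℝ) ≤ 2 * N := by
        have : Q * (N/Q + 1) ≤ 2 * N := by
          have := Nat.div_mul_le_self N Q
          rw [mul_add, mul_one, mul_comm]; omega
        exact_mod_cast this
      set S := ∑ m ∈ Finset.range (N/Q+1), H (x + m) with hS
      have hS0 : 0 ≤ S := Finset.sum_nonneg fun _ _ => hH0 _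
      have hLp : (0:ℝ) < ((N/Q + 1 : ℕ) : ℝ) := by positivity
      calc (N:ℝ)⁻¹ * (2 * ∑ n ∈ Finset.Icc 1 N, H (x + (n / Q : ℕ))) ≤ (N:ℝ)⁻¹ * (2 * (Q * S)) := by gcongr
        _ ≤ 4 * (S / ((N/Q + 1 : ℕ) : ℝ)) := by
          rw [← mul_div_assoc, le_div_iff₀ hLp, inv_mul_eq_div, div_mul_eq_mul_div, div_le_iff₀ hN0]
          nlinarith
  choose! L hL1 hL2 using key
  simp only [hFinv]
  rw [(hF r).tsum_eq]
  rw [show (40:ℝ) = Real.sqrt (40^2) by rw [Real.sqrt_sq (by norm_num)], ← Real.sqrt_mul (by norm_num)]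
  refine Real.sqrt_le_sqrt ?_
  have hN1 : ∀ n : ℕ, 1 ≤ 2^n := fun n => Nat.one_le_two_pow
  have hfin : ∀ (t : Finset ℤ) (n : ℤ → ℕ), ∑ x ∈ t, ‖FinvInt (fun ξ => Mhat β (2^(n x)) ξ * (etaPer η s ξ : ℂ) * fhat f ξ) ((Q:ℤ)*x + r)‖^2
      ≤ 40^2 * E := by
    intro t n
    have := hl_int H hH0 hHs t (fun x => L x (2^(n x))) (fun x => hL1 x _ (hN1 _))
    calc _ ≤ ∑ x ∈ t, (4 * ((∑ j ∈ Finset.range (L x (2^(n x))), H (x + j)) / (L x (2^(n x)))))^2 := by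
          refine Finset.sum_le_sum fun x _ => ?_
          exact pow_le_pow_left₀ (norm_nonneg _) (hL2 x _ (hN1 _)) 2
      _ = 16 * ∑ x ∈ t, ((∑ j ∈ Finset.range (L x (2^(n x))), H (x + j)) / (L x (2^(n x))))^2 := by
          rw [Finset.mul_sum]
          refine Finset.sum_congr rfl fun x _ => ?_
          ring
      _ ≤ 40^2 * E := by linarith
  refine Real.tsum_le_of_sum_le (fun x => sq_nonneg _) fun t => ?_
  refine sup_aux (fun x n => ‖FinvInt (fun ξ => Mhat β (2^n) ξ * (etaPer η s ξ : ℂ) * fhat f ξ) ((Q:ℤ)*x + r)‖)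
    _ (fun x => ?_) t (hfin t)
  refine ⟨Real.sqrt (40^2*E), ?_⟩
  rintro _ ⟨n, rfl⟩
  refine Real.le_sqrt_of_sq_le ?_
  simpa using hfin {x} (fun _ => n)
end

section
/- For each ε > 0 there is C > 0 with the following property. Let s ∈ ℕ, and suppose that for each q with 2^s ≤ q < 2^{s+1} one is given δ_q ∈ {0, 1}, a quadratic Dirichlet character χ_q modulo q, and β_q ∈ [1/2, 1]. For a/q ∈ 𝓡_s define L̂_N^{a,q}(ξ) = G(𝟙_q, a) M̂_N^1(ξ) − δ_q G(χ_q, a) M̂_N^{β_q}(ξ), where 𝟙_q is the principal character modulo q, and set ν_n^s(ξ) = Σ_{a/q ∈ 𝓡_s} L̂_{2^n}^{a,q}(ξ − a/q) η_s(ξ − a/q). Then for every finitely supported f : ℤ → ℂ, ‖ sup_{0 ≤ n ≤ 2^{s+4}} |ℱ⁻¹(ν_n^s f̂)| ‖_{ℓ²(ℤ)} ≤ C (s+1) 2^{−s(1/2−ε)} ‖f‖_{ℓ²(ℤ)}, where C is independent of s and of the choices of δ_q, χ_q, β_q. -/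
open scoped BigOperators

/-- The fractions `a/q ∈ 𝓡_s`, encoded as pairs `(a, q)` with `a ∈ A_q`,
`2^s ≤ q < 2^{s+1}`, and `q` square-free or `4 ∣ q` with `q/4` square-free. -/
def Rset (s : ℕ) : Finset (ℕ × ℕ) :=
  (Finset.range (2 ^ (s + 1)) ×ˢ Finset.range (2 ^ (s + 1))).filter
    (fun p => 2 ^ s ≤ p.2 ∧ 1 ≤ p.1 ∧ p.1 ≤ p.2 ∧ Nat.Coprime p.1 p.2 ∧
      (Squarefree p.2 ∨ (4 ∣ p.2 ∧ Squarefree (p.2 / 4))))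

/-- The approximating multiplier `ν_n^s` built from the data `δ_q`, `χ_q`, `β_q`:
`ν_n^s(ξ) = Σ_{a/q ∈ 𝓡_s} L̂_{2^n}^{a,q}(ξ − a/q) η_s(ξ − a/q)` where
`L̂_N^{a,q} = G(𝟙_q, a) M̂_N^1 − δ_q G(χ_q, a) M̂_N^{β_q}`. -/
noncomputable def nuMult (η : ℝ → ℝ) (δ : ℕ → ℕ) (χ : (q : ℕ) → DirichletCharacter ℂ q)
    (β : ℕ → ℝ) (s n : ℕ) (ξ : ℝ) : ℂ :=
  ∑ p ∈ Rset s,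
    (gaussG p.2 1 (p.1 : ℤ) * Mhat 1 (2 ^ n) (ξ - (p.1 : ℝ) / p.2) -
        (δ p.2 : ℂ) * gaussG p.2 (χ p.2) (p.1 : ℤ) * Mhat (β p.2) (2 ^ n) (ξ - (p.1 : ℝ) / p.2)) *
      (etaPer η s (ξ - (p.1 : ℝ) / p.2) : ℂ)


lemma aux_prod (S : Finset ℕ) : (∀ p ∈ S, 2 ≤ p) →
    ∏ p ∈ S, p ≤ (S.card + 1) * ∏ p ∈ S, (p - 1) := by
  induction S using Finset.induction_on_max with
  | empty => simp
  | insert a S ha ih =>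
    intro h
    have hna : a ∉ S := fun h' => lt_irrefl _ (ha a h')
    have ih' := ih (fun p hp => h p (Finset.mem_insert_of_mem hp))
    have h2 : 2 ≤ a := h a (Finset.mem_insert_self _ _)
    have hc : S.card + 2 ≤ a := by
      have : S ⊆ Finset.Ico 2 a := by
        intro p hp
        exact Finset.mem_Ico.2 ⟨h p (Finset.mem_insert_of_mem hp), ha p hp⟩
      have := Finset.card_le_card this
      rw [Nat.card_Ico] at this
      omega
    rw [Finset.prod_insert hna, Finset.prod_insert hna, Finset.card_insert_of_notMem hna]
    obtain ⟨b, rfl⟩ : ∃ b, a = b + 1 := ⟨a - 1, by omega⟩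
    simp only [Nat.add_sub_cancel]
    have h3 : (b + 1) * (S.card + 1) ≤ (S.card + 1 + 1) * b := by nlinarith
    calc (b + 1) * ∏ p ∈ S, p ≤ (b + 1) * ((S.card + 1) * ∏ p ∈ S, (p - 1)) :=
          Nat.mul_le_mul_left _ ih'
      _ = ((b + 1) * (S.card + 1)) * ∏ p ∈ S, (p - 1) := by ring
      _ ≤ ((S.card + 1 + 1) * b) * ∏ p ∈ S, (p - 1) := Nat.mul_le_mul_right _ h3
      _ = _ := by ring

lemma aux_totient (s q : ℕ) (h0 : 0 < q) (hq : q < 2 ^ (s + 1)) :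
    q ≤ (s + 1) * q.totient := by
  have h1 := aux_prod q.primeFactors (fun p hp => (Nat.prime_of_mem_primeFactors hp).two_le)
  have hcard : q.primeFactors.card ≤ s := by
    have h2 : 2 ^ q.primeFactors.card ≤ ∏ p ∈ q.primeFactors, p :=
      Finset.pow_card_le_prod _ _ _ (fun p hp => (Nat.prime_of_mem_primeFactors hp).two_le)
    have h3 : ∏ p ∈ q.primeFactors, p ≤ q := Nat.le_of_dvd h0 (Nat.prod_primeFactors_dvd q)
    have h4 : 2 ^ q.primeFactors.card < 2 ^ (s + 1) := by omega
    have := (Nat.pow_lt_pow_iff_right (by norm_num : 1 < 2)).1 h4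
    omega
  have h5 := Nat.totient_mul_prod_primeFactors q
  have hpos : 0 < ∏ p ∈ q.primeFactors, (p - 1) :=
    Finset.prod_pos (fun p hp => by have := (Nat.prime_of_mem_primeFactors hp).two_le; omega)
  refine Nat.le_of_mul_le_mul_right ?_ hpos
  rw [← h5]
  calc q.totient * ∏ p ∈ q.primeFactors, p
      ≤ q.totient * ((q.primeFactors.card + 1) * ∏ p ∈ q.primeFactors, (p - 1)) :=
        Nat.mul_le_mul_left _ h1
    _ ≤ q.totient * ((s + 1) * ∏ p ∈ q.primeFactors, (p - 1)) := by gcongr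
    _ = _ := by ring

lemma aux_gauss_sq (q : ℕ) [NeZero q] (χ : DirichletCharacter ℂ q) (u : (ZMod q)ˣ) :
    ‖∑ r : ZMod q, χ r * ZMod.stdAddChar (r * (u : ZMod q))‖ ^ 2 ≤ q := by
  set S : ZMod q → ℂ := fun a => ∑ r : ZMod q, χ r * ZMod.stdAddChar (r * a) with hS
  -- all units give the same absolute value
  have hχu : ∀ v : (ZMod q)ˣ, ‖χ (v : ZMod q)‖ = 1 := fun v => χ.unit_norm_eq_one v
  have hunit : ∀ v : (ZMod q)ˣ, ‖S v‖ = ‖S 1‖ := by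
    intro v
    have h := gaussSum_mulShift χ (ZMod.stdAddChar (N := q)) v
    have e1 : gaussSum χ (AddChar.mulShift (ZMod.stdAddChar (N := q)) v) = S v := by
      simp [gaussSum, hS, AddChar.mulShift_apply, mul_comm]
    have e2 : gaussSum χ (ZMod.stdAddChar (N := q)) = S 1 := by
      simp [gaussSum, hS]
    rw [e1, e2] at h
    rw [← h, norm_mul, hχu, one_mul]
  have hpars : ((∑ a : ZMod q, ‖S a‖ ^ 2 : ℝ) : ℂ) = (q : ℂ) * ∑ r : ZMod q, ((‖χ r‖ ^ 2 : ℝ) : ℂ) := by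
    have hchar : (0:ℕ) < ringChar (ZMod q) := by
      rw [ZMod.ringChar_zmod_n]; exact Nat.pos_of_ne_zero (NeZero.ne q)
    have h1 : ∀ a, ((‖S a‖ ^ 2 : ℝ) : ℂ) =
        ∑ r : ZMod q, ∑ t : ZMod q, (χ r * (starRingEnd ℂ) (χ t)) * ZMod.stdAddChar (a * (r - t)) := by
      intro a
      push_cast
      rw [← Complex.mul_conj']
      simp only [hS, map_sum, map_mul]
      rw [Finset.sum_mul_sum]
      refine Finset.sum_congr rfl fun r _ => Finset.sum_congr rfl fun t _ => ?_
      have : (starRingEnd ℂ) (ZMod.stdAddChar (t * a)) = ZMod.stdAddChar (-(t * a)) := by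
        rw [AddChar.map_neg_eq_conj]
      rw [this, mul_mul_mul_comm, ← AddChar.map_add_eq_mul]
      congr 2
      ring
    push_cast
    have h1' : ∀ a, ((‖S a‖ : ℂ) ^ 2) =
        ∑ r : ZMod q, ∑ t : ZMod q, (χ r * (starRingEnd ℂ) (χ t)) * ZMod.stdAddChar (a * (r - t)) := by
      intro a; rw [← h1]; push_cast; rfl
    simp only [h1']
    rw [Finset.sum_comm, Finset.mul_sum]
    refine Finset.sum_congr rfl fun r _ => ?_
    rw [Finset.sum_comm]
    simp only [← Finset.mul_sum, AddChar.sum_mulShift _ (ZMod.isPrimitive_stdAddChar q), sub_eq_zero]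
    rw [Finset.sum_eq_single r]
    · simp [Complex.mul_conj']; ring
    · intro t _ ht
      rw [if_neg (Ne.symm ht)]; simp
    · simp
  have hsumχ : ∑ r : ZMod q, ‖χ r‖ ^ 2 ≤ (Fintype.card (ZMod q)ˣ : ℝ) := by
    classical
    have : ∀ r : ZMod q, ‖χ r‖ ^ 2 = if r ∈ Finset.univ.image (fun v : (ZMod q)ˣ => (v : ZMod q)) then 1 else 0 := by
      intro r
      split_ifs with h
      · obtain ⟨v, -, rfl⟩ := Finset.mem_image.1 h
        rw [hχu]; norm_num
      · rw [MulChar.map_nonunit]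
        · simp
        · rintro ⟨v, rfl⟩; exact h (Finset.mem_image.2 ⟨v, Finset.mem_univ _, rfl⟩)
    simp only [this]
    rw [Finset.sum_ite_mem]
    simp only [Finset.univ_inter, Finset.sum_const, nsmul_eq_mul, mul_one]
    exact_mod_cast Finset.card_image_le
  have hpars' : (∑ a : ZMod q, ‖S a‖ ^ 2 : ℝ) = (q : ℝ) * ∑ r : ZMod q, ‖χ r‖ ^ 2 := by
    exact_mod_cast hpars
  have hlow : (Fintype.card (ZMod q)ˣ : ℝ) * ‖S 1‖ ^ 2 ≤ ∑ a : ZMod q, ‖S a‖ ^ 2 := by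
    classical
    calc (Fintype.card (ZMod q)ˣ : ℝ) * ‖S 1‖ ^ 2 = ∑ v : (ZMod q)ˣ, ‖S v‖ ^ 2 := by
          simp only [hunit]; simp
      _ = ∑ a ∈ Finset.univ.image (fun v : (ZMod q)ˣ => (v : ZMod q)), ‖S a‖ ^ 2 := by
          rw [Finset.sum_image]; intro a _ b _ h; exact Units.ext h
      _ ≤ _ := Finset.sum_le_sum_of_subset_of_nonneg (Finset.subset_univ _) (fun _ _ _ => by positivity)
  have hcpos : (0:ℝ) < Fintype.card (ZMod q)ˣ := by exact_mod_cast Fintype.card_pos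
  change ‖S u‖ ^ 2 ≤ q
  rw [hunit]
  refine le_of_mul_le_mul_left ?_ hcpos
  calc _ ≤ _ := hlow
    _ = _ := hpars'
    _ ≤ (q : ℝ) * (Fintype.card (ZMod q)ˣ : ℝ) := by gcongr
    _ = _ := by ring

lemma aux_gaussG (s q a : ℕ) (h1 : 2 ^ s ≤ q) (h2 : q < 2 ^ (s + 1)) (ha : Nat.Coprime a q)
    (χ : DirichletCharacter ℂ q) :
    ‖gaussG q χ (a : ℤ)‖ ≤ (s + 1) / Real.sqrt (2 ^ s) := by
  have hq0 : 0 < q := lt_of_lt_of_le (by positivity) h1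
  have : NeZero q := ⟨hq0.ne'⟩
  have key : ∑ r ∈ Aq q, χ (r : ZMod q) * Complex.exp (2 * Real.pi * Complex.I * r * (a : ℤ) / q)
      = ∑ r : ZMod q, χ r * ZMod.stdAddChar (r * ((ZMod.unitOfCoprime a ha : (ZMod q)ˣ) : ZMod q)) := by
    have hterm : ∀ r : ℕ, χ (r : ZMod q) * Complex.exp (2 * Real.pi * Complex.I * r * (a : ℤ) / q)
        = χ (r : ZMod q) * ZMod.stdAddChar ((r : ZMod q) * ((ZMod.unitOfCoprime a ha : (ZMod q)ˣ) : ZMod q)) := by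
      intro r
      have := ZMod.stdAddChar_coe (N := q) ((r : ℤ) * a)
      rw [ZMod.coe_unitOfCoprime]
      push_cast at this
      rw [this]
      congr 2
      push_cast; ring
    simp only [hterm]
    have e1 : ∑ r ∈ Aq q, χ (r : ZMod q) * ZMod.stdAddChar ((r : ZMod q) * ((ZMod.unitOfCoprime a ha : (ZMod q)ˣ) : ZMod q))
       = ∑ r ∈ Finset.Icc 1 q, χ (r : ZMod q) * ZMod.stdAddChar ((r : ZMod q) * ((ZMod.unitOfCoprime a ha : (ZMod q)ˣ) : ZMod q)) := by
      unfold Aq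
      refine Finset.sum_filter_of_ne ?_
      intro r _ hr
      by_contra hc
      apply hr
      rw [MulChar.map_nonunit, zero_mul]
      rwa [ZMod.isUnit_iff_coprime]
    rw [e1]
    refine Finset.sum_bij (fun r _ => (r : ZMod q)) (fun _ _ => Finset.mem_univ _) ?_ ?_ (fun _ _ => rfl)
    · intro x hx y hy hxy
      rw [ZMod.natCast_eq_natCast_iff] at hxy
      rw [Finset.mem_Icc] at hx hy
      have := hxy
      have h' : x - 1 ≡ y - 1 [MOD q] := by
        apply Nat.ModEq.add_right_cancel' 1
        rwa [Nat.sub_add_cancel hx.1, Nat.sub_add_cancel hy.1]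
      have := Nat.ModEq.eq_of_lt_of_lt h' (by omega) (by omega)
      omega
    · intro b _
      by_cases hb : b = 0
      · exact ⟨q, by simp; omega, by simp [hb]⟩
      · refine ⟨b.val, ?_, by simp⟩
        have := ZMod.val_lt b
        have : b.val ≠ 0 := by rwa [Ne, ZMod.val_eq_zero]
        rw [Finset.mem_Icc]; omega
  have hsq := aux_gauss_sq q χ (ZMod.unitOfCoprime a ha)
  rw [← key] at hsq
  unfold gaussG
  rw [norm_mul, norm_inv, Complex.norm_natCast]
  set X := ‖∑ r ∈ Aq q, χ (r : ZMod q) * Complex.exp (2 * Real.pi * Complex.I * r * (a : ℤ) / q)‖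
  have hX : X ≤ Real.sqrt q := Real.le_sqrt_of_sq_le hsq
  have hφ : (0:ℝ) < q.totient := by exact_mod_cast Nat.totient_pos.2 hq0
  have ht : (q : ℝ) ≤ (s + 1) * q.totient := by exact_mod_cast aux_totient s q hq0 h2
  have hs : (0:ℝ) < Real.sqrt (2 ^ s) := by positivity
  have hsq2 : Real.sqrt (2 ^ s) ≤ Real.sqrt q := Real.sqrt_le_sqrt (by exact_mod_cast h1)
  have hqq : Real.sqrt q * Real.sqrt q = q := Real.mul_self_sqrt (by positivity)
  rw [inv_mul_eq_div, div_le_div_iff₀ hφ hs]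
  calc X * Real.sqrt (2 ^ s) ≤ Real.sqrt q * Real.sqrt q := by gcongr
    _ ≤ _ := by rw [hqq]; exact ht

lemma aux_w_anti (β : ℝ) (h1 : 1 / 2 ≤ β) (h2 : β ≤ 1) (n : ℕ) (hn : 1 ≤ n) :
    (((n + 1 : ℕ) : ℝ) ^ β - (((n + 1 : ℕ) : ℝ) - 1) ^ β) / β ≤ ((n : ℝ) ^ β - ((n : ℝ) - 1) ^ β) / β := by
  have hβ : 0 < β := by linarith
  have hc := Real.concaveOn_rpow hβ.le h2
  have hn' : (1:ℝ) ≤ n := by exact_mod_cast hn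
  have m1 : (n:ℝ) - 1 ∈ Set.Ici (0:ℝ) := by rw [Set.mem_Ici]; linarith
  have m2 : (n:ℝ) + 1 ∈ Set.Ici (0:ℝ) := by rw [Set.mem_Ici]; linarith
  have := hc.2 m1 m2 (by norm_num : (0:ℝ) ≤ 1/2) (by norm_num : (0:ℝ) ≤ 1/2) (by norm_num)
  simp only [smul_eq_mul] at this
  have e : (1/2 : ℝ) * ((n:ℝ) - 1) + 1/2 * (n + 1) = n := by ring
  rw [e] at this
  push_cast
  rw [add_sub_cancel_right]
  gcongr ?_ / β
  linarith

lemma aux_w_nonneg (β : ℝ) (h1 : 1 / 2 ≤ β) (n : ℕ) (hn : 1 ≤ n) :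
    0 ≤ ((n : ℝ) ^ β - ((n : ℝ) - 1) ^ β) / β := by
  have hβ : 0 < β := by linarith
  have hn' : (1:ℝ) ≤ n := by exact_mod_cast hn
  apply div_nonneg _ hβ.le
  have := Real.rpow_le_rpow (x := (n:ℝ) - 1) (y := n) (z := β) (by linarith) (by linarith) hβ.le
  linarith

lemma aux_w_sum (β : ℝ) (h1 : 1 / 2 ≤ β) (N : ℕ) :
    ∑ n ∈ Finset.Icc 1 N, ((n : ℝ) ^ β - ((n : ℝ) - 1) ^ β) / β = (N : ℝ) ^ β / β := by
  have hβ : 0 < β := by linarith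
  induction N with
  | zero => simp [Real.zero_rpow hβ.ne']
  | succ N ih =>
    rw [Finset.sum_Icc_succ_top (by omega), ih]
    push_cast
    rw [add_sub_cancel_right]; ring

lemma aux_Mhat_eq (β : ℝ) (N : ℕ) (ξ : ℝ) :
    Mhat β N ξ = ((N : ℂ))⁻¹ * ∑ n ∈ Finset.Icc 1 N,
    (((((n : ℝ) ^ β - ((n : ℝ) - 1) ^ β) / β) : ℝ) : ℂ) *
      Complex.exp (2 * Real.pi * Complex.I * ξ) ^ n := by
  unfold Mhat
  congr 1
  refine Finset.sum_congr rfl fun n _ => ?_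
  rw [← Complex.exp_nat_mul]
  congr 2; ring

lemma aux_norm_z (ξ : ℝ) : ‖Complex.exp (2 * Real.pi * Complex.I * ξ)‖ = 1 := by
  have : (2 * Real.pi * Complex.I * ξ : ℂ) = ((2 * Real.pi * ξ : ℝ) : ℂ) * Complex.I := by
    push_cast; ring
  rw [this, Complex.norm_exp_ofReal_mul_I]

lemma aux_pow_sub_one (z : ℂ) (hz : ‖z‖ = 1) (n : ℕ) : ‖z ^ n - 1‖ ≤ n * ‖z - 1‖ := by
  induction n with
  | zero => simp
  | succ n ih =>
    have : z ^ (n + 1) - 1 = z * (z ^ n - 1) + (z - 1) := by ring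
    rw [this]
    refine (norm_add_le _ _).trans ?_
    rw [norm_mul, hz]
    push_cast; linarith

lemma aux_abel (w : ℕ → ℝ) (hw : ∀ n, 1 ≤ n → w (n + 1) ≤ w n) (hw0 : ∀ n, 1 ≤ n → 0 ≤ w n)
    (z : ℂ) (hz : ‖z‖ = 1) (N : ℕ) (hN : 1 ≤ N) :
    ‖(∑ n ∈ Finset.Icc 1 N, (w n : ℂ) * z ^ n) * (z - 1)‖ ≤ 2 * w 1 := by
  have key : ∀ N : ℕ, 1 ≤ N →
      ‖(∑ n ∈ Finset.Icc 1 N, (w n : ℂ) * z ^ n) * (z - 1) - w N * z ^ (N + 1)‖ ≤ w 1 + (w 1 - w N) := by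
    intro N hN
    induction N, hN using Nat.le_induction with
    | base =>
      simp only [Finset.Icc_self, Finset.sum_singleton]
      have : (w 1 : ℂ) * z ^ 1 * (z - 1) - w 1 * z ^ (1 + 1) = - (w 1 * z) := by ring
      rw [this, norm_neg, norm_mul, hz, Complex.norm_real, Real.norm_of_nonneg (hw0 1 le_rfl)]
      linarith
    | succ N hN ih =>
      rw [Finset.sum_Icc_succ_top (by omega)]
      have : (∑ n ∈ Finset.Icc 1 N, (w n : ℂ) * z ^ n + w (N + 1) * z ^ (N + 1)) * (z - 1)
          - w (N + 1) * z ^ (N + 1 + 1) =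
          ((∑ n ∈ Finset.Icc 1 N, (w n : ℂ) * z ^ n) * (z - 1) - w N * z ^ (N + 1))
          + ((w N - w (N + 1) : ℝ) : ℂ) * z ^ (N + 1) := by push_cast; ring
      rw [this]
      refine (norm_add_le _ _).trans ?_
      rw [norm_mul, norm_pow, hz, Complex.norm_real, Real.norm_of_nonneg (by linarith [hw N hN]), one_pow, mul_one]
      linarith
  have h1 := key N hN
  have h2 : ‖(w N : ℂ) * z ^ (N + 1)‖ = w N := by
    rw [norm_mul, norm_pow, hz, Complex.norm_real, Real.norm_of_nonneg (hw0 N hN)]; simp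
  have h3 := norm_sub_norm_le ((∑ n ∈ Finset.Icc 1 N, (w n : ℂ) * z ^ n) * (z - 1)) ((w N : ℂ) * z ^ (N + 1))
  linarith

/-- `c_N`, the total mass. -/
noncomputable def cM (β : ℝ) (N : ℕ) : ℝ := (N : ℝ)⁻¹ * ((N : ℝ) ^ β / β)

lemma cM_anti (β : ℝ) (h1 : 1 / 2 ≤ β) (h2 : β ≤ 1) (M N : ℕ) (hM : 1 ≤ M) (h : M ≤ N) :
    cM β N ≤ cM β M := by
  have e : ∀ K : ℕ, 1 ≤ K → cM β K = (K : ℝ) ^ (β - 1) / β := by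
    intro K hK
    have : (0:ℝ) < K := by exact_mod_cast hK
    unfold cM
    rw [Real.rpow_sub_one this.ne']; field_simp
  rw [e M hM, e N (hM.trans h)]
  gcongr ?_ / β
  exact Real.rpow_le_rpow_of_nonpos (by exact_mod_cast hM) (by exact_mod_cast h) (by linarith)

lemma cM_one (β : ℝ) (h1 : 1 / 2 ≤ β) : cM β 1 ≤ 2 := by
  simp only [cM, Nat.cast_one, Real.one_rpow, inv_one, one_mul]
  rw [div_le_iff₀ (by linarith)]; linarith

lemma cM_nonneg (β : ℝ) (h1 : 1 / 2 ≤ β) (N : ℕ) : 0 ≤ cM β N := by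
  unfold cM
  have : 0 < β := by linarith
  positivity

lemma aux_M_A (β : ℝ) (h1 : 1 / 2 ≤ β) (h2 : β ≤ 1) (N : ℕ) (hN : 1 ≤ N) (ξ : ℝ) :
    ‖Mhat β N ξ - cM β N‖ ≤ 2 * (N * ‖Complex.exp (2 * Real.pi * Complex.I * ξ) - 1‖) := by
  rw [aux_Mhat_eq]
  set z := Complex.exp (2 * Real.pi * Complex.I * ξ)
  have hz : ‖z‖ = 1 := aux_norm_z ξ
  have hN' : (0:ℝ) < N := by exact_mod_cast hN
  unfold cM
  rw [← aux_w_sum β h1 N]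
  push_cast
  rw [← mul_sub, ← Finset.sum_sub_distrib, norm_mul, norm_inv, Complex.norm_natCast]
  calc _ ≤ (N : ℝ)⁻¹ * ∑ n ∈ Finset.Icc 1 N, (((n : ℝ) ^ β - ((n : ℝ) - 1) ^ β) / β) * (N * ‖z - 1‖) := by
        gcongr
        refine (norm_sum_le _ _).trans (Finset.sum_le_sum fun n hn => ?_)
        rw [Finset.mem_Icc] at hn
        rw [← mul_sub_one]
        rw [norm_mul]
        have e : (((((n:ℝ) ^ β : ℝ) : ℂ) - ((((n:ℝ) - 1) ^ β : ℝ) : ℂ)) / (β : ℂ)) = (((((n : ℝ) ^ β - ((n : ℝ) - 1) ^ β) / β) : ℝ) : ℂ) := by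
          push_cast; rfl
        rw [e, Complex.norm_real, Real.norm_of_nonneg (aux_w_nonneg β h1 n hn.1)]
        refine mul_le_mul_of_nonneg_left ?_ (aux_w_nonneg β h1 n hn.1)
        refine (aux_pow_sub_one z hz n).trans ?_
        gcongr
        exact hn.2
    _ = cM β N * (N * ‖z - 1‖) := by
        rw [← Finset.sum_mul, aux_w_sum β h1, cM]; ring
    _ ≤ _ := by
        gcongr
        exact (cM_anti β h1 h2 1 N le_rfl hN).trans (cM_one β h1)

lemma aux_M_B (β : ℝ) (h1 : 1 / 2 ≤ β) (h2 : β ≤ 1) (N : ℕ) (hN : 1 ≤ N) (ξ : ℝ) :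
    ‖Mhat β N ξ‖ * (N * ‖Complex.exp (2 * Real.pi * Complex.I * ξ) - 1‖) ≤ 4 := by
  rw [aux_Mhat_eq]
  set z := Complex.exp (2 * Real.pi * Complex.I * ξ)
  have hz : ‖z‖ = 1 := aux_norm_z ξ
  have hN' : (0:ℝ) < N := by exact_mod_cast hN
  have := aux_abel (fun n => ((n : ℝ) ^ β - ((n : ℝ) - 1) ^ β) / β)
    (fun n hn => aux_w_anti β h1 h2 n hn) (fun n hn => aux_w_nonneg β h1 n hn) z hz N hN
  rw [norm_mul] at this ⊢
  rw [norm_inv, Complex.norm_natCast]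
  have e : ∀ A B : ℝ, (N:ℝ)⁻¹ * A * (N * B) = A * B := by
    intro A B; field_simp
  rw [e]
  refine this.trans ?_
  have hβ : 0 < β := by linarith
  simp [Real.zero_rpow hβ.ne']
  have : β⁻¹ ≤ 2 := by
    rw [inv_le_comm₀ hβ (by norm_num)]; linarith
  linarith

lemma aux_M_zero (β : ℝ) (h1 : 1 / 2 ≤ β) (ξ : ℝ) : ‖Mhat β 1 ξ‖ ≤ 2 := by
  rw [aux_Mhat_eq]
  have hβ : 0 < β := by linarith
  simp only [Finset.Icc_self, Finset.sum_singleton, norm_mul, pow_one, aux_norm_z]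
  simp [Real.zero_rpow hβ.ne', abs_of_pos hβ]
  rw [inv_le_comm₀ hβ (by norm_num)]; linarith

lemma aux_phi (x : ℝ) (hx : 0 ≤ x) (e : ℝ) (he : x ≤ 1 → e ≤ 4 * x) (he' : 1 < x → e * x ≤ 4) :
    e ≤ 24 * (1 / (1 + x) - 1 / (1 + 2 * x)) := by
  have e1 : 1 / (1 + x) - 1 / (1 + 2 * x) = x / ((1 + x) * (1 + 2 * x)) := by
    field_simp; ring
  rw [e1, ← mul_div_assoc, le_div_iff₀ (by positivity)]
  rcases le_or_gt x 1 with h | h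
  · have := he h
    have h3 : (1 + x) * (1 + 2 * x) ≤ 6 := by nlinarith
    have h4 : e * ((1 + x) * (1 + 2 * x)) ≤ 4 * x * ((1 + x) * (1 + 2 * x)) := by gcongr
    nlinarith
  · have := he' h
    have h3 : (1 + x) * (1 + 2 * x) ≤ 6 * x * x := by nlinarith
    rcases le_or_gt 0 e with h0 | h0
    · have : e * ((1 + x) * (1 + 2 * x)) ≤ e * (6 * x * x) := by gcongr
      nlinarith
    · have : e * ((1 + x) * (1 + 2 * x)) ≤ 0 := mul_nonpos_of_nonpos_of_nonneg h0.le (by positivity)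
      nlinarith

lemma aux_variation (β : ℝ) (h1 : 1 / 2 ≤ β) (h2 : β ≤ 1) (ξ : ℝ) (K : ℕ) :
    ∑ n ∈ Finset.range K, ‖Mhat β (2 ^ (n + 1)) ξ - Mhat β (2 ^ n) ξ‖ ≤ 50 := by
  set t := ‖Complex.exp (2 * Real.pi * Complex.I * ξ) - 1‖ with ht
  have ht0 : 0 ≤ t := norm_nonneg _
  set b : ℕ → ℝ := fun n => if (2:ℝ) ^ n * t ≤ 1 then cM β (2 ^ n) else 0 with hb
  set Φ : ℕ → ℝ := fun n => 1 / (1 + (2:ℝ) ^ n * t) with hΦ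
  have hΦ0 : ∀ n, 0 ≤ Φ n := fun n => by simp only [hΦ]; positivity
  have hΦ1 : ∀ n, Φ n ≤ 1 := fun n => by
    simp only [hΦ]
    rw [div_le_one (by positivity)]
    have : 0 ≤ (2:ℝ) ^ n * t := by positivity
    linarith
  have hb0 : ∀ n, 0 ≤ b n := fun n => by
    simp only [hb]; split_ifs
    · exact cM_nonneg β h1 _
    · exact le_rfl
  have hb2 : b 0 ≤ 2 := by
    simp only [hb]; split_ifs
    · simpa using cM_one β h1
    · norm_num
  have hbanti : ∀ n, b (n + 1) ≤ b n := by
    intro n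
    simp only [hb]
    by_cases h : (2:ℝ) ^ (n + 1) * t ≤ 1
    · have h' : (2:ℝ) ^ n * t ≤ 1 := by
        refine le_trans ?_ h
        gcongr
        · norm_num
        · omega
      rw [if_pos h, if_pos h']
      exact cM_anti β h1 h2 _ _ Nat.one_le_two_pow (Nat.pow_le_pow_right (by norm_num) (by omega))
    · rw [if_neg h]; exact hb0 n
  have he : ∀ n, ‖Mhat β (2 ^ n) ξ - b n‖ ≤ 24 * (Φ n - Φ (n + 1)) := by
    intro n
    have e1 : Φ (n + 1) = 1 / (1 + 2 * ((2:ℝ) ^ n * t)) := by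
      simp only [hΦ, pow_succ]; congr 2; ring
    rw [e1]
    apply aux_phi _ (by positivity)
    · intro h
      have := aux_M_A β h1 h2 (2 ^ n) Nat.one_le_two_pow ξ
      simp only [hb, if_pos h]
      rw [← ht] at this
      push_cast at this
      have hp : 0 ≤ (2:ℝ) ^ n * t := by positivity
      linarith
    · intro h
      have := aux_M_B β h1 h2 (2 ^ n) Nat.one_le_two_pow ξ
      simp only [hb, if_neg (not_le.2 h)]
      rw [← ht] at this
      push_cast at this
      simpa using this
  have hstep : ∀ n, ‖Mhat β (2 ^ (n + 1)) ξ - Mhat β (2 ^ n) ξ‖ ≤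
      (b n - b (n + 1)) + 24 * (Φ n - Φ (n + 1)) + 24 * (Φ (n + 1) - Φ (n + 1 + 1)) := by
    intro n
    have e : Mhat β (2 ^ (n + 1)) ξ - Mhat β (2 ^ n) ξ = (Mhat β (2 ^ (n + 1)) ξ - b (n + 1))
       - (Mhat β (2 ^ n) ξ - b n) + ((b (n + 1) - b n : ℝ) : ℂ) := by push_cast; ring
    rw [e]
    refine (norm_add_le _ _).trans ?_
    have h3 := norm_sub_le (Mhat β (2 ^ (n + 1)) ξ - b (n + 1)) (Mhat β (2 ^ n) ξ - b n)
    have h4 : ‖((b (n + 1) - b n : ℝ) : ℂ)‖ = b n - b (n + 1) := by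
      rw [Complex.norm_real, Real.norm_of_nonpos (by linarith [hbanti n])]; ring
    linarith [he n, he (n + 1)]
  have htel : ∀ K, ∑ n ∈ Finset.range K, ‖Mhat β (2 ^ (n + 1)) ξ - Mhat β (2 ^ n) ξ‖ ≤
      (b 0 - b K) + 24 * (Φ 0 - Φ K) + 24 * (Φ 1 - Φ (K + 1)) := by
    intro K
    induction K with
    | zero => simp
    | succ K ih =>
      rw [Finset.sum_range_succ]
      linarith [hstep K]
  linarith [htel K, hb0 K, hΦ0 K, hΦ0 (K + 1), hΦ1 0, hΦ1 1]

lemma aux_eta (η : ℝ → ℝ) (hη : IsEta η) (s : ℕ) (ξ : ℝ) :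
    etaPer η s ξ = η (2 ^ (4 * s) * (ξ - round ξ)) := by
  unfold etaPer
  refine tsum_eq_single (round ξ) ?_
  intro k hk
  apply hη.2.2.2.1
  have h1 : (1:ℝ) ≤ |((k - round ξ : ℤ) : ℝ)| := by
    rw [← Int.cast_abs]
    exact_mod_cast Int.one_le_abs (sub_ne_zero.2 hk)
  have h2 := abs_sub_round ξ
  have h3 : 1 / 2 ≤ |ξ - k| := by
    have : ((k - round ξ : ℤ) : ℝ) = (ξ - round ξ) - (ξ - k) := by push_cast; ring
    rw [this] at h1
    have := abs_sub (ξ - round ξ) (ξ - k)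
    linarith
  rw [abs_mul, abs_of_pos (by positivity : (0:ℝ) < 2 ^ (4 * s))]
  have h4 : (1:ℝ) ≤ 2 ^ (4 * s) := one_le_pow₀ (by norm_num)
  nlinarith

lemma aux_eta_meas (η : ℝ → ℝ) (hη : IsEta η) (s : ℕ) : Measurable (etaPer η s) := by
  have : etaPer η s = fun ξ => η (2 ^ (4 * s) * (ξ - round ξ)) := funext (aux_eta η hη s)
  rw [this]
  have hr : Measurable (fun ξ : ℝ => (round ξ : ℝ)) := by
    simp only [round_eq]
    have : Measurable (fun ξ : ℝ => ⌊ξ + 1 / 2⌋) := Int.measurable_floor.comp (measurable_id.add_const _)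
    exact (measurable_from_top (f := fun n : ℤ => (n : ℝ))).comp this
  exact hη.1.continuous.measurable.comp ((measurable_id.sub hr).const_mul _)

lemma aux_eta_bd (η : ℝ → ℝ) (hη : IsEta η) (s : ℕ) (ξ : ℝ) :
    0 ≤ etaPer η s ξ ∧ etaPer η s ξ ≤ 1 := by
  rw [aux_eta η hη]; exact hη.2.1 _

lemma aux_eta_supp (η : ℝ → ℝ) (hη : IsEta η) (s : ℕ) (ξ : ℝ) (h : etaPer η s ξ ≠ 0) :
    2 ^ (4 * s) * |ξ - round ξ| < 1 / 2 := by
  rw [aux_eta η hη] at h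
  by_contra hc
  apply h
  apply hη.2.2.2.1
  rw [abs_mul, abs_of_pos (by positivity : (0:ℝ) < 2 ^ (4 * s))]
  linarith

lemma aux_sep (η : ℝ → ℝ) (hη : IsEta η) (s : ℕ) (hs : 1 ≤ s) (ξ : ℝ) (p p' : ℕ × ℕ)
    (hp : p ∈ Rset s) (hp' : p' ∈ Rset s)
    (h : etaPer η s (ξ - (p.1 : ℝ) / p.2) ≠ 0) (h' : etaPer η s (ξ - (p'.1 : ℝ) / p'.2) ≠ 0) :
    p = p' := by
  obtain ⟨a, q⟩ := p
  obtain ⟨a', q'⟩ := p'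
  simp only [Rset, Finset.mem_filter, Finset.mem_product, Finset.mem_range] at hp hp' h h'
  obtain ⟨⟨-, hq2⟩, hq1, ha1, haq, hc, -⟩ := hp
  obtain ⟨⟨-, hq2'⟩, hq1', ha1', haq', hc', -⟩ := hp'
  have hqp : 0 < q := lt_of_lt_of_le (by positivity) hq1
  have hqp' : 0 < q' := lt_of_lt_of_le (by positivity) hq1'
  have e := aux_eta_supp η hη s _ h
  have e' := aux_eta_supp η hη s _ h'
  set k := round (ξ - (a : ℝ) / q)
  set k' := round (ξ - (a' : ℝ) / q')
  have hqR : (0:ℝ) < q := by exact_mod_cast hqp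
  have hqR' : (0:ℝ) < q' := by exact_mod_cast hqp'
  have hP : (0:ℝ) < 2 ^ (4 * s) := by positivity
  have hd : 2 ^ (4 * s) * |(a : ℝ) / q - a' / q' + (k - k' : ℤ)| < 1 := by
    have e2 : (a : ℝ) / q - a' / q' + (k - k' : ℤ) = (ξ - a' / q' - k') - (ξ - a / q - k) := by
      push_cast; ring
    rw [e2]
    have := abs_sub (ξ - a' / q' - k') (ξ - a / q - k)
    have := mul_le_mul_of_nonneg_left this hP.le
    rw [mul_add] at this
    linarith
  have hqq : (q : ℝ) * q' ≤ 2 ^ (4 * s) := by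
    have : q * q' ≤ 2 ^ (4 * s) := by
      calc q * q' ≤ 2 ^ (s + 1) * 2 ^ (s + 1) := Nat.mul_le_mul hq2.le hq2'.le
        _ = 2 ^ (2 * s + 2) := by rw [← pow_add]; congr 1; ring
        _ ≤ _ := Nat.pow_le_pow_right (by norm_num) (by omega)
    exact_mod_cast this
  set m : ℤ := k - k'
  have hint : (a : ℤ) * q' - a' * q + m * (q * q') = 0 := by
    rw [← Int.abs_lt_one_iff]
    have : |((a : ℝ) * q' - a' * q + m * (q * q'))| < 1 := by
      have e3 : (a : ℝ) * q' - a' * q + m * (q * q') = (q * q') * ((a : ℝ) / q - a' / q' + m) := by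
        field_simp
      rw [e3, abs_mul, abs_of_pos (by positivity)]
      refine lt_of_le_of_lt ?_ hd
      gcongr
    exact_mod_cast this
  have hd1 : (q : ℤ) ∣ a * q' := ⟨a' - m * q', by linear_combination hint⟩
  have hd2 : (q' : ℤ) ∣ a' * q := ⟨a + m * q, by linear_combination -hint⟩
  have hd1' : q ∣ q' := by
    have : q ∣ a * q' := by exact_mod_cast hd1
    exact Nat.Coprime.dvd_of_dvd_mul_left hc.symm this
  have hd2' : q' ∣ q := by
    have : q' ∣ a' * q := by exact_mod_cast hd2
    exact Nat.Coprime.dvd_of_dvd_mul_left hc'.symm this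
  have hqe : q = q' := Nat.dvd_antisymm hd1' hd2'
  subst hqe
  have h5 : (a : ℤ) - a' + m * q = 0 := by
    have : (q : ℤ) * ((a : ℤ) - a' + m * q) = 0 := by linear_combination hint
    rcases mul_eq_zero.1 this with h0 | h0
    · omega
    · exact h0
  have hm : m = 0 := by
    by_contra hm
    rcases lt_or_gt_of_ne hm with h6 | h6
    · have : m * q ≤ (-1) * q := by
        apply mul_le_mul_of_nonneg_right <;> omega
      omega
    · have : 1 * (q:ℤ) ≤ m * q := by
        apply mul_le_mul_of_nonneg_right <;> omega
      omega
  rw [hm] at h5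
  have : a = a' := by omega
  rw [this]

/-- one summand of the multiplier -/
noncomputable def trm (η : ℝ → ℝ) (δ : ℕ → ℕ) (χ : (q : ℕ) → DirichletCharacter ℂ q)
    (β : ℕ → ℝ) (s n : ℕ) (ξ : ℝ) (p : ℕ × ℕ) : ℂ :=
  (gaussG p.2 1 (p.1 : ℤ) * Mhat 1 (2 ^ n) (ξ - (p.1 : ℝ) / p.2) -
        (δ p.2 : ℂ) * gaussG p.2 (χ p.2) (p.1 : ℤ) * Mhat (β p.2) (2 ^ n) (ξ - (p.1 : ℝ) / p.2)) *
      (etaPer η s (ξ - (p.1 : ℝ) / p.2) : ℂ)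

lemma aux_nu (η : ℝ → ℝ) (hη : IsEta η) (s : ℕ) (hs : 1 ≤ s) (δ : ℕ → ℕ) (hδ : ∀ q, δ q ≤ 1)
    (χ : (q : ℕ) → DirichletCharacter ℂ q) (β : ℕ → ℝ) (hβ : ∀ q, 1 / 2 ≤ β q ∧ β q ≤ 1) (ξ : ℝ) :
    ‖nuMult η δ χ β s 0 ξ‖ ≤ 100 * ((s + 1) / Real.sqrt (2 ^ s)) ∧
    ∀ K, ∑ n ∈ Finset.range K, ‖nuMult η δ χ β s (n + 1) ξ - nuMult η δ χ β s n ξ‖ ≤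
      100 * ((s + 1) / Real.sqrt (2 ^ s)) := by
  have hg0 : (0:ℝ) ≤ (s + 1) / Real.sqrt (2 ^ s) := by positivity
  by_cases hex : ∃ p ∈ Rset s, etaPer η s (ξ - (p.1 : ℝ) / p.2) ≠ 0
  · obtain ⟨p, hp, hpe⟩ := hex
    have hν : ∀ n, nuMult η δ χ β s n ξ = trm η δ χ β s n ξ p := by
      intro n
      refine Finset.sum_eq_single p ?_ (fun h => absurd hp h)
      intro p' hp' hne
      have : etaPer η s (ξ - (p'.1 : ℝ) / p'.2) = 0 := by
        by_contra h'
        exact hne (aux_sep η hη s hs ξ p' p hp' hp h' hpe)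
      rw [this]; simp
    simp only [hν]
    simp only [Rset, Finset.mem_filter, Finset.mem_product, Finset.mem_range] at hp
    obtain ⟨⟨-, hq2⟩, hq1, ha1, haq, hc, -⟩ := hp
    have g1 := aux_gaussG s p.2 p.1 hq1 hq2 hc 1
    have g2 := aux_gaussG s p.2 p.1 hq1 hq2 hc (χ p.2)
    have hδ1 : ‖(δ p.2 : ℂ)‖ ≤ 1 := by
      rw [Complex.norm_natCast]; exact_mod_cast hδ p.2
    have he := aux_eta_bd η hη s (ξ - (p.1 : ℝ) / p.2)
    have he1 : ‖(etaPer η s (ξ - (p.1 : ℝ) / p.2) : ℂ)‖ ≤ 1 := by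
      rw [Complex.norm_real, Real.norm_of_nonneg he.1]; exact he.2
    set g := (s + 1) / Real.sqrt (2 ^ s)
    set E := (etaPer η s (ξ - (p.1 : ℝ) / p.2) : ℂ)
    set θ := ξ - (p.1 : ℝ) / p.2 with hθ
    set G1 := gaussG p.2 1 (p.1 : ℤ)
    set G2 := gaussG p.2 (χ p.2) (p.1 : ℤ)
    have gen : ∀ x y : ℂ, ‖(G1 * x - δ p.2 * G2 * y) * E‖ ≤ g * (‖x‖ + ‖y‖) := by
      intro x y
      rw [norm_mul]
      calc _ ≤ ‖G1 * x - δ p.2 * G2 * y‖ * 1 := by gcongr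
        _ ≤ ‖G1 * x‖ + ‖δ p.2 * G2 * y‖ := by rw [mul_one]; exact norm_sub_le _ _
        _ = ‖G1‖ * ‖x‖ + ‖(δ p.2 : ℂ)‖ * ‖G2‖ * ‖y‖ := by simp only [norm_mul]
        _ ≤ g * ‖x‖ + 1 * g * ‖y‖ := by gcongr
        _ = _ := by ring
    constructor
    · refine (gen _ _).trans ?_
      have := aux_M_zero 1 (by norm_num) θ
      have := aux_M_zero (β p.2) (hβ _).1 θ
      simp only [pow_zero]
      nlinarith
    · intro K
      calc _ ≤ ∑ n ∈ Finset.range K, g * (‖Mhat 1 (2 ^ (n + 1)) θ - Mhat 1 (2 ^ n) θ‖ +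
            ‖Mhat (β p.2) (2 ^ (n + 1)) θ - Mhat (β p.2) (2 ^ n) θ‖) := by
            refine Finset.sum_le_sum fun n _ => ?_
            refine le_trans (le_of_eq ?_) (gen _ _)
            congr 1
            unfold trm
            ring
        _ = g * (∑ n ∈ Finset.range K, ‖Mhat 1 (2 ^ (n + 1)) θ - Mhat 1 (2 ^ n) θ‖ +
            ∑ n ∈ Finset.range K, ‖Mhat (β p.2) (2 ^ (n + 1)) θ - Mhat (β p.2) (2 ^ n) θ‖) := by
            rw [← Finset.sum_add_distrib, Finset.mul_sum]
        _ ≤ g * (50 + 50) := by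
            gcongr
            · exact aux_variation 1 (by norm_num) le_rfl θ K
            · exact aux_variation (β p.2) (hβ _).1 (hβ _).2 θ K
        _ = _ := by ring
  · push Not at hex
    have hν : ∀ n, nuMult η δ χ β s n ξ = 0 := by
      intro n
      refine Finset.sum_eq_zero fun p hp => ?_
      rw [hex p hp]; simp
    simp only [hν]
    constructor
    · simp only [norm_zero]; positivity
    · intro K; simp only [sub_zero, norm_zero, Finset.sum_const_zero]; positivity

lemma aux_nu_meas (η : ℝ → ℝ) (hη : IsEta η) (s : ℕ) (δ : ℕ → ℕ)
    (χ : (q : ℕ) → DirichletCharacter ℂ q) (β : ℕ → ℝ) (n : ℕ) :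
    Measurable (nuMult η δ χ β s n) := by
  have hM : ∀ b N, Measurable (Mhat b N) := by
    intro b N
    apply Continuous.measurable
    unfold Mhat
    fun_prop
  have hE := aux_eta_meas η hη s
  unfold nuMult
  refine Finset.measurable_fun_sum _ fun p _ => ?_
  have hsub : Measurable (fun ξ : ℝ => ξ - (p.1 : ℝ) / p.2) := measurable_id.sub_const _
  exact ((((hM _ _).comp hsub).const_mul _).sub (((hM _ _).comp hsub).const_mul _)).mul
    (Complex.measurable_ofReal.comp (hE.comp hsub))

lemma aux_nu_bd (η : ℝ → ℝ) (hη : IsEta η) (s : ℕ) (hs : 1 ≤ s) (δ : ℕ → ℕ) (hδ : ∀ q, δ q ≤ 1)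
    (χ : (q : ℕ) → DirichletCharacter ℂ q) (β : ℕ → ℝ) (hβ : ∀ q, 1 / 2 ≤ β q ∧ β q ≤ 1) (n : ℕ) (ξ : ℝ) :
    ‖nuMult η δ χ β s n ξ‖ ≤ 200 * ((s + 1) / Real.sqrt (2 ^ s)) := by
  obtain ⟨h0, h1⟩ := aux_nu η hη s hs δ hδ χ β hβ ξ
  have h2 := dist_le_range_sum_dist (fun n => nuMult η δ χ β s n ξ) n
  simp only [dist_eq_norm, norm_sub_rev (nuMult η δ χ β s _ ξ) (nuMult η δ χ β s (_ + 1) ξ)] at h2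
  have h3 := h1 n
  have h4 := norm_sub_norm_le (nuMult η δ χ β s n ξ) (nuMult η δ χ β s 0 ξ)
  rw [norm_sub_rev] at h4
  linarith

lemma aux_RM (a : ℕ → ℂ) (S n : ℕ) (hn : n ≤ 2 ^ S) :
    ‖a n‖ ^ 2 ≤ (S + 2) * (‖a 0‖ ^ 2 + ∑ i ∈ Finset.range (S + 1), ∑ j ∈ Finset.range (2 ^ (S - i)),
      ‖a ((j + 1) * 2 ^ i) - a (j * 2 ^ i)‖ ^ 2) := by
  set d : ℕ → ℂ := fun i => a (n / 2 ^ i * 2 ^ i) with hd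
  have hd0 : d 0 = a n := by simp [hd]
  have hdS : d (S + 1) = a 0 := by
    have : n / 2 ^ (S + 1) = 0 := by
      apply Nat.div_eq_of_lt
      rw [pow_succ]; have : 0 < 2 ^ S := by positivity
      omega
    simp [hd, this]
  have hstep : ∀ i ∈ Finset.range (S + 1), ‖d i - d (i + 1)‖ ^ 2 ≤
      ∑ j ∈ Finset.range (2 ^ (S - i)), ‖a ((j + 1) * 2 ^ i) - a (j * 2 ^ i)‖ ^ 2 := by
    intro i hi
    have hi' : i ≤ S := by rw [Finset.mem_range] at hi; omega
    have e1 : n / 2 ^ (i + 1) * 2 ^ (i + 1) = (n / 2 ^ i / 2 * 2) * 2 ^ i := by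
      rw [Nat.div_div_eq_div_mul, ← pow_succ]; ring
    set m := n / 2 ^ i with hm
    have hmS : m ≤ 2 ^ (S - i) := by
      calc m ≤ 2 ^ S / 2 ^ i := Nat.div_le_div_right hn
        _ = 2 ^ (S - i) := Nat.pow_div hi' (by norm_num)
    have hdi : d i = a (m * 2 ^ i) := rfl
    have hdi1 : d (i + 1) = a ((m / 2 * 2) * 2 ^ i) := by simp only [hd, e1]
    rcases Nat.even_or_odd' m with ⟨k, hk | hk⟩
    · have : m / 2 * 2 = m := by omega
      rw [hdi, hdi1, this, sub_self]
      simp only [norm_zero]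
      exact le_trans (by norm_num) (Finset.sum_nonneg fun _ _ => by positivity)
    · have h2 : m / 2 * 2 = 2 * k := by omega
      rw [hdi, hdi1, h2, hk]
      exact Finset.single_le_sum (f := fun j => ‖a ((j + 1) * 2 ^ i) - a (j * 2 ^ i)‖ ^ 2)
        (fun _ _ => by positivity) (Finset.mem_range.2 (by omega))
  set v : ℕ → ℝ := fun k => if k = 0 then ‖a 0‖ else ‖d (k - 1) - d k‖ with hv
  have hle : ‖a n‖ ≤ ∑ k ∈ Finset.range (S + 2), v k := by
    rw [Finset.sum_range_succ']
    simp only [hv, Nat.add_sub_cancel, if_true, Nat.add_eq_zero_iff, one_ne_zero, and_false, if_false]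
    have h3 := dist_le_range_sum_dist d (S + 1)
    simp only [dist_eq_norm] at h3
    rw [hd0, hdS] at h3
    have := norm_sub_norm_le (a n) (a 0)
    linarith
  have hcs := sq_sum_le_card_mul_sum_sq (s := Finset.range (S + 2)) (f := v)
  rw [Finset.card_range] at hcs
  calc ‖a n‖ ^ 2 ≤ (∑ k ∈ Finset.range (S + 2), v k) ^ 2 := by gcongr
    _ ≤ _ := hcs
    _ ≤ _ := by
      push_cast
      gcongr
      rw [Finset.sum_range_succ', add_comm]
      simp only [hv, Nat.add_sub_cancel, if_true, Nat.add_eq_zero_iff, one_ne_zero, and_false, if_false]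
      gcongr with i hi
      exact hstep i hi

lemma aux_blocks (a : ℕ → ℂ) (m J : ℕ) :
    ∑ j ∈ Finset.range J, ‖a ((j + 1) * m) - a (j * m)‖ ^ 2 ≤
      (∑ n ∈ Finset.range (J * m), ‖a (n + 1) - a n‖) ^ 2 := by
  refine (Finset.sum_sq_le_sq_sum_of_nonneg (fun _ _ => norm_nonneg _)).trans ?_
  gcongr
  induction J with
  | zero => simp
  | succ J ih =>
    rw [Finset.sum_range_succ]
    have h := dist_le_Ico_sum_dist a (m := J * m) (n := (J + 1) * m) (by gcongr; omega)
    simp only [dist_eq_norm, norm_sub_rev (a _) (a (_ + 1))] at h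
    rw [norm_sub_rev] at h
    rw [← Finset.sum_range_add_sum_Ico _ (show J * m ≤ (J + 1) * m by gcongr; omega)]
    linarith

/-- bounded measurable -/
def BM (F : ℝ → ℂ) : Prop := Measurable F ∧ ∃ B, ∀ ξ, ‖F ξ‖ ≤ B

lemma BM.sub {F G : ℝ → ℂ} (hF : BM F) (hG : BM G) : BM (fun ξ => F ξ - G ξ) := by
  obtain ⟨h1, B, hB⟩ := hF
  obtain ⟨h2, C, hC⟩ := hG
  exact ⟨h1.sub h2, B + C, fun ξ => (norm_sub_le _ _).trans (add_le_add (hB ξ) (hC ξ))⟩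

lemma BM.mul {F G : ℝ → ℂ} (hF : BM F) (hG : BM G) : BM (fun ξ => F ξ * G ξ) := by
  obtain ⟨h1, B, hB⟩ := hF
  obtain ⟨h2, C, hC⟩ := hG
  refine ⟨h1.mul h2, B * C, fun ξ => ?_⟩
  rw [norm_mul]
  exact mul_le_mul (hB ξ) (hC ξ) (norm_nonneg _) ((norm_nonneg _).trans (hB ξ))

lemma BM.intervalIntegrable {F : ℝ → ℂ} (hF : BM F) : IntervalIntegrable F MeasureTheory.volume 0 1 := by
  obtain ⟨h1, B, hB⟩ := hF
  rw [intervalIntegrable_iff]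
  exact MeasureTheory.Measure.integrableOn_of_bounded (M := B) (by simp) h1.aestronglyMeasurable
    (Filter.Eventually.of_forall hB)

lemma BM.sq_intervalIntegrable {F : ℝ → ℂ} (hF : BM F) :
    IntervalIntegrable (fun ξ => ‖F ξ‖ ^ 2) MeasureTheory.volume 0 1 := by
  obtain ⟨h1, B, hB⟩ := hF
  rw [intervalIntegrable_iff]
  refine MeasureTheory.Measure.integrableOn_of_bounded (M := B ^ 2) (by simp)
    (h1.norm.pow_const 2).aestronglyMeasurable
    (Filter.Eventually.of_forall fun ξ => ?_)
  rw [Real.norm_of_nonneg (by positivity)]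
  gcongr
  exact hB ξ

lemma BM.exp (x : ℤ) : BM (fun ξ => Complex.exp (2 * Real.pi * Complex.I * ξ * x)) := by
  refine ⟨Continuous.measurable (by fun_prop), 1, fun ξ => le_of_eq ?_⟩
  show ‖Complex.exp (2 * Real.pi * Complex.I * ξ * x)‖ = 1
  have : (2 * Real.pi * Complex.I * ξ * x : ℂ) = ((2 * Real.pi * ξ * x : ℝ) : ℂ) * Complex.I := by
    push_cast; ring
  rw [this, Complex.norm_exp_ofReal_mul_I]

lemma FinvInt_sub {F G : ℝ → ℂ} (hF : BM F) (hG : BM G) (x : ℤ) :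
    FinvInt F x - FinvInt G x = FinvInt (fun ξ => F ξ - G ξ) x := by
  unfold FinvInt
  rw [← intervalIntegral.integral_sub (hF.mul (BM.exp x)).intervalIntegrable
    (hG.mul (BM.exp x)).intervalIntegrable]
  congr 1
  ext ξ; ring

lemma FinvInt_parseval {F : ℝ → ℂ} (hF : BM F) :
    HasSum (fun x : ℤ => ‖FinvInt F x‖ ^ 2) (∫ ξ in (0:ℝ)..1, ‖F ξ‖ ^ 2) := by
  have hmem : MeasureTheory.MemLp F 2 (MeasureTheory.volume.restrict (Set.Ioc (0:ℝ) 1)) := by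
    obtain ⟨h1, B, hB⟩ := hF
    exact MeasureTheory.MemLp.of_bound h1.aestronglyMeasurable B (Filter.Eventually.of_forall hB)
  have h := hasSum_sq_fourierCoeffOn (by norm_num : (0:ℝ) < 1) hmem
  have h2 := (Equiv.neg ℤ).hasSum_iff.2 h
  simp only [sub_zero, inv_one, one_smul] at h2
  convert h2 using 2 with x
  simp only [Function.comp_apply, Equiv.neg_apply]
  rw [fourierCoeffOn_eq_integral]
  congr 2
  simp only [sub_zero, div_one, one_smul, neg_neg]
  unfold FinvInt
  congr 1
  ext ξ
  rw [fourier_coe_apply, smul_eq_mul, mul_comm]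
  congr 2
  push_cast; ring

lemma fhat_eq (f : ℤ → ℂ) (hf : (Function.support f).Finite) (ξ : ℝ) :
    fhat f ξ = ∑ n ∈ hf.toFinset, f n * Complex.exp (2 * Real.pi * Complex.I * ξ * (-n : ℤ)) := by
  unfold fhat
  rw [tsum_eq_sum (s := hf.toFinset)]
  · refine Finset.sum_congr rfl fun n _ => ?_
    congr 2; push_cast; ring
  · intro n hn
    have : f n = 0 := by simpa using hn
    simp [this]

lemma fhat_BM (f : ℤ → ℂ) (hf : (Function.support f).Finite) : BM (fhat f) := by
  have : fhat f = fun ξ : ℝ => ∑ n ∈ hf.toFinset, f n * Complex.exp (2 * Real.pi * Complex.I * ξ * (-n : ℤ)) :=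
    funext (fhat_eq f hf)
  rw [this]
  refine ⟨Continuous.measurable (by fun_prop), ∑ n ∈ hf.toFinset, ‖f n‖, fun ξ => ?_⟩
  refine (norm_sum_le _ _).trans (Finset.sum_le_sum fun n _ => ?_)
  have e : (2 * Real.pi * Complex.I * ξ * (-n : ℤ) : ℂ) = ((2 * Real.pi * ξ * (-n : ℤ) : ℝ) : ℂ) * Complex.I := by
    push_cast; ring
  rw [norm_mul, e, Complex.norm_exp_ofReal_mul_I, mul_one]

lemma int_exp (m : ℤ) : ∫ ξ in (0:ℝ)..1, Complex.exp (2 * Real.pi * Complex.I * ξ * m) =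
    if m = 0 then 1 else 0 := by
  split_ifs with h
  · simp [h]
  · have hc : (2 * Real.pi * Complex.I * m : ℂ) ≠ 0 := by
      simp [h, Real.pi_ne_zero]
    have e : ∀ ξ : ℝ, (2 * Real.pi * Complex.I * ξ * m : ℂ) = (2 * Real.pi * Complex.I * m) * ξ := by
      intro ξ; ring
    simp only [e]
    rw [integral_exp_mul_complex hc]
    have : Complex.exp (2 * Real.pi * Complex.I * m * (1:ℝ)) = 1 := by
      rw [Complex.exp_eq_one_iff]
      exact ⟨m, by push_cast; ring⟩
    rw [this]; simp

lemma FinvInt_fhat (f : ℤ → ℂ) (hf : (Function.support f).Finite) (x : ℤ) :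
    FinvInt (fhat f) x = f x := by
  unfold FinvInt
  have e : ∀ ξ : ℝ, fhat f ξ * Complex.exp (2 * Real.pi * Complex.I * ξ * x) =
      ∑ n ∈ hf.toFinset, f n * Complex.exp (2 * Real.pi * Complex.I * ξ * (x - n : ℤ)) := by
    intro ξ
    rw [fhat_eq f hf, Finset.sum_mul]
    refine Finset.sum_congr rfl fun n _ => ?_
    rw [mul_assoc, ← Complex.exp_add]
    congr 2; push_cast; ring
  simp only [e]
  rw [intervalIntegral.integral_finsetSum
    (fun n _ => ((BM.exp (x - n)).intervalIntegrable).const_mul _)]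
  simp only [intervalIntegral.integral_const_mul, int_exp, sub_eq_zero]
  by_cases h : f x = 0
  · rw [h]
    refine Finset.sum_eq_zero fun n _ => ?_
    split_ifs with h'
    · rw [← h', h]; simp
    · simp
  · rw [Finset.sum_eq_single x]
    · simp
    · intro n _ hn; rw [if_neg (Ne.symm hn)]; simp
    · intro h'; simp at h'; exact absurd h' h

lemma fhat_parseval (f : ℤ → ℂ) (hf : (Function.support f).Finite) :
    ∫ ξ in (0:ℝ)..1, ‖fhat f ξ‖ ^ 2 = ∑' x : ℤ, ‖f x‖ ^ 2 := by
  have := (FinvInt_parseval (fhat_BM f hf)).tsum_eq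
  simp only [FinvInt_fhat f hf] at this
  exact this.symm

lemma aux_max (ν : ℕ → ℝ → ℂ) (hν : ∀ n, BM (ν n)) (D : ℝ) (hD : 0 ≤ D) (h0 : ∀ ξ, ‖ν 0 ξ‖ ≤ D)
    (h1 : ∀ ξ K, ∑ n ∈ Finset.range K, ‖ν (n + 1) ξ - ν n ξ‖ ≤ D) (S : ℕ)
    (f : ℤ → ℂ) (hf : (Function.support f).Finite) :
    ∑' x : ℤ, (⨆ n : Fin (2 ^ S + 1), ‖FinvInt (fun ξ => ν n ξ * fhat f ξ) x‖) ^ 2 ≤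
      ((S + 2) * D) ^ 2 * ∑' x : ℤ, ‖f x‖ ^ 2 := by
  have hfB := fhat_BM f hf
  set I := ∫ ξ in (0:ℝ)..1, ‖fhat f ξ‖ ^ 2 with hI
  have hνf : ∀ n, BM (fun ξ => ν n ξ * fhat f ξ) := fun n => (hν n).mul hfB
  set A : ℤ → ℕ → ℂ := fun x n => FinvInt (fun ξ => ν n ξ * fhat f ξ) x with hA
  have hdiff : ∀ x m n, A x m - A x n = FinvInt (fun ξ => (ν m ξ - ν n ξ) * fhat f ξ) x := by
    intro x m n
    simp only [hA]
    rw [FinvInt_sub (hνf m) (hνf n)]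
    congr 1; ext ξ; ring
  have hdB : ∀ m n, BM (fun ξ => (ν m ξ - ν n ξ) * fhat f ξ) := fun m n => ((hν m).sub (hν n)).mul hfB
  set R : ℤ → ℝ := fun x => (S + 2) * (‖A x 0‖ ^ 2 + ∑ i ∈ Finset.range (S + 1),
    ∑ j ∈ Finset.range (2 ^ (S - i)), ‖A x ((j + 1) * 2 ^ i) - A x (j * 2 ^ i)‖ ^ 2) with hR
  have hsum : HasSum R ((S + 2) * ((∫ ξ in (0:ℝ)..1, ‖ν 0 ξ * fhat f ξ‖ ^ 2) +
      ∑ i ∈ Finset.range (S + 1), ∑ j ∈ Finset.range (2 ^ (S - i)),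
        ∫ ξ in (0:ℝ)..1, ‖(ν ((j + 1) * 2 ^ i) ξ - ν (j * 2 ^ i) ξ) * fhat f ξ‖ ^ 2)) := by
    refine HasSum.mul_left _ (HasSum.add (FinvInt_parseval (hνf 0)) ?_)
    refine hasSum_sum fun i _ => hasSum_sum fun j _ => ?_
    simp only [hdiff]
    exact FinvInt_parseval (hdB _ _)
  have hIn : 0 ≤ I := intervalIntegral.integral_nonneg (by norm_num) (fun _ _ => by positivity)
  have hbase : ∫ ξ in (0:ℝ)..1, ‖ν 0 ξ * fhat f ξ‖ ^ 2 ≤ D ^ 2 * I := by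
    rw [hI, ← intervalIntegral.integral_const_mul]
    refine intervalIntegral.integral_mono_on (by norm_num) (hνf 0).sq_intervalIntegrable
      (hfB.sq_intervalIntegrable.const_mul _) fun ξ _ => ?_
    rw [norm_mul, mul_pow]
    gcongr
    exact h0 ξ
  have hlev : ∀ i, ∑ j ∈ Finset.range (2 ^ (S - i)),
        ∫ ξ in (0:ℝ)..1, ‖(ν ((j + 1) * 2 ^ i) ξ - ν (j * 2 ^ i) ξ) * fhat f ξ‖ ^ 2 ≤ D ^ 2 * I := by
    intro i
    have hint : IntervalIntegrable (fun ξ => ∑ j ∈ Finset.range (2 ^ (S - i)),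
        ‖(ν ((j + 1) * 2 ^ i) ξ - ν (j * 2 ^ i) ξ) * fhat f ξ‖ ^ 2) MeasureTheory.volume 0 1 := by
      have := IntervalIntegrable.sum (Finset.range (2 ^ (S - i)))
        (fun j _ => (hdB ((j + 1) * 2 ^ i) (j * 2 ^ i)).sq_intervalIntegrable)
      have e : (fun ξ => ∑ j ∈ Finset.range (2 ^ (S - i)),
          ‖(ν ((j + 1) * 2 ^ i) ξ - ν (j * 2 ^ i) ξ) * fhat f ξ‖ ^ 2) =
          ∑ j ∈ Finset.range (2 ^ (S - i)), fun ξ =>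
          ‖(ν ((j + 1) * 2 ^ i) ξ - ν (j * 2 ^ i) ξ) * fhat f ξ‖ ^ 2 := by
        ext ξ; rw [Finset.sum_apply]
      rw [e]
      exact this
    rw [← intervalIntegral.integral_finsetSum (fun j _ => (hdB _ _).sq_intervalIntegrable),
      hI, ← intervalIntegral.integral_const_mul]
    refine intervalIntegral.integral_mono_on (by norm_num)
      hint
      (hfB.sq_intervalIntegrable.const_mul _) fun ξ _ => ?_
    simp only [norm_mul, mul_pow]
    rw [← Finset.sum_mul]
    gcongr
    refine (aux_blocks (fun n => ν n ξ) (2 ^ i) (2 ^ (S - i))).trans ?_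
    have := h1 ξ (2 ^ (S - i) * 2 ^ i)
    gcongr
  have hpt : ∀ x, (⨆ n : Fin (2 ^ S + 1), ‖A x n‖) ^ 2 ≤ R x := by
    intro x
    have hR0 : 0 ≤ R x := by simp only [hR]; positivity
    have : (⨆ n : Fin (2 ^ S + 1), ‖A x n‖) ≤ Real.sqrt (R x) := by
      apply ciSup_le
      intro n
      apply Real.le_sqrt_of_sq_le
      exact aux_RM (A x) S n (by omega)
    calc _ ≤ (Real.sqrt (R x)) ^ 2 := by
          gcongr
          exact Real.iSup_nonneg fun _ => norm_nonneg _
      _ = R x := Real.sq_sqrt hR0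
  have hs2 : Summable (fun x : ℤ => (⨆ n : Fin (2 ^ S + 1), ‖A x n‖) ^ 2) :=
    Summable.of_nonneg_of_le (fun _ => by positivity) hpt hsum.summable
  rw [← fhat_parseval f hf, ← hI]
  calc _ ≤ ∑' x, R x := hs2.tsum_le_tsum hpt hsum.summable
    _ = _ := hsum.tsum_eq
    _ ≤ (S + 2) * (D ^ 2 * I + ∑ i ∈ Finset.range (S + 1), D ^ 2 * I) := by
        gcongr with i hi
        exact hlev i
    _ = _ := by
        rw [Finset.sum_const, Finset.card_range, nsmul_eq_mul]; push_cast; ring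

/-- `ℓ²` bound for the maximal function of the approximating multipliers `ν_n^s`
over `0 ≤ n ≤ 2^{s+4}`. -/
theorem stmt_13 (ε : ℝ) (hε : 0 < ε) (η : ℝ → ℝ) (hη : IsEta η) :
    ∃ C : ℝ, 0 < C ∧
      ∀ (s : ℕ), 1 ≤ s →
        ∀ (δ : ℕ → ℕ), (∀ q, δ q ≤ 1) →
          ∀ (χ : (q : ℕ) → DirichletCharacter ℂ q),
            (∀ q, 2 ^ s ≤ q → q < 2 ^ (s + 1) →
              (∀ m : ZMod q, χ q m = -1 ∨ χ q m = 0 ∨ χ q m = 1) ∧ ∃ m : ZMod q, χ q m = -1) →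
            ∀ (β : ℕ → ℝ), (∀ q, 1 / 2 ≤ β q ∧ β q ≤ 1) →
              ∀ (f : ℤ → ℂ), (Function.support f).Finite →
                Real.sqrt (∑' x : ℤ,
                    (⨆ n : Fin (2 ^ (s + 4) + 1),
                      ‖FinvInt (fun ξ => nuMult η δ χ β s n ξ * fhat f ξ) x‖) ^ 2) ≤
                  C * (s + 1) * (2 : ℝ) ^ (-(s : ℝ) * (1 / 2 - ε)) *
                    Real.sqrt (∑' x : ℤ, ‖f x‖ ^ 2) := by
  obtain hlog : 0 < Real.log 2 := Real.log_pos (by norm_num)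
  have hel : 0 < ε * Real.log 2 := mul_pos hε hlog
  refine ⟨100 * (6 + 1 / (ε * Real.log 2)), by positivity, ?_⟩
  intro s hs δ hδ χ _ β hβ f hf
  set g : ℝ := (s + 1) / Real.sqrt (2 ^ s) with hg
  have hg0 : 0 ≤ g := by positivity
  have hmax := aux_max (nuMult η δ χ β s)
    (fun n => ⟨aux_nu_meas η hη s δ χ β n, _, aux_nu_bd η hη s hs δ hδ χ β hβ n⟩) (100 * g)
    (by positivity) (fun ξ => (aux_nu η hη s hs δ hδ χ β hβ ξ).1)
    (fun ξ => (aux_nu η hη s hs δ hδ χ β hβ ξ).2) (s + 4) f hf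
  refine (Real.sqrt_le_sqrt hmax).trans ?_
  rw [Real.sqrt_mul (by positivity), Real.sqrt_sq (by positivity)]
  refine mul_le_mul_of_nonneg_right ?_ (Real.sqrt_nonneg _)
  push_cast
  have e1 : (2:ℝ) ^ (-(s:ℝ) * (1 / 2 - ε)) = (2:ℝ) ^ ((s:ℝ) * ε) / Real.sqrt (2 ^ s) := by
    rw [Real.sqrt_eq_rpow, ← Real.rpow_natCast 2 s, ← Real.rpow_mul (by norm_num),
      ← Real.rpow_sub (by norm_num)]
    congr 1; ring
  have e2 : 1 + s * (ε * Real.log 2) ≤ (2:ℝ) ^ ((s:ℝ) * ε) := by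
    rw [Real.rpow_def_of_pos (by norm_num)]
    have := Real.add_one_le_exp (Real.log 2 * (s * ε))
    linarith
  have e3 : (s:ℝ) + 6 ≤ (6 + 1 / (ε * Real.log 2)) * (2:ℝ) ^ ((s:ℝ) * ε) := by
    calc (s:ℝ) + 6 ≤ (6 + 1 / (ε * Real.log 2)) * (1 + s * (ε * Real.log 2)) := by
          have h1 : 1 / (ε * Real.log 2) * (s * (ε * Real.log 2)) = s := by field_simp
          have h2 : 0 < 1 / (ε * Real.log 2) := by positivity
          have h3 : 0 ≤ (s:ℝ) * (ε * Real.log 2) := by positivity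
          linear_combination (-1 : ℝ) * h1 + h2 + 6 * h3
      _ ≤ _ := by gcongr
  rw [e1, hg]
  have hsq : 0 < Real.sqrt (2 ^ s) := by positivity
  calc ((s:ℝ) + 4 + 2) * (100 * ((s + 1) / Real.sqrt (2 ^ s)))
      = (s + 6) * (100 * (s + 1) / Real.sqrt (2 ^ s)) := by ring
    _ ≤ ((6 + 1 / (ε * Real.log 2)) * (2:ℝ) ^ ((s:ℝ) * ε)) * (100 * (s + 1) / Real.sqrt (2 ^ s)) := by
        gcongr
    _ = _ := by ring
end
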